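/- arXiv:2105.02356 — 2 statements merged into one kernel-verified Lean document; each statement's English description precedes it below -/
import Mathlib

section
/- For every positive integer r, there exists a strongly connected bridgeless mixed multigraph of radius r such that every orientation of it that is strongly connected has radius at least r² + 3r − 1. -/
/-- A mixed multigraph: a multigraph whose edges are each either directed
(traversable only from `src` to `dst`) or undirected (traversable both ways).
Parallel edges are allowed since `E` is an abstract edge-index type. -/
structure MixedMultigraph where
  V : Type
  E : Type
  [fintV : Fintype V]
  [fintE : Fintype E]
  src : E → V
  dst : E → V
  directed : E → Bool

attribute [instance] MixedMultigraph.fintV MixedMultigraph.fintE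

namespace MixedMultigraph

/-- A dart is a traversal of an edge; an edge may be traversed in reverse
(`rev = true`) only if it is undirected. -/
structure Dart (G : MixedMultigraph) where
  edge : G.E
  rev : Bool
  ok : rev = true → G.directed edge = false

/-- The starting vertex of a dart. -/
def Dart.fst {G : MixedMultigraph} (d : G.Dart) : G.V :=
  if d.rev then G.dst d.edge else G.src d.edge

/-- The ending vertex of a dart. -/
def Dart.snd {G : MixedMultigraph} (d : G.Dart) : G.V :=
  if d.rev then G.src d.edge else G.dst d.edge

/-- A walk from `u` to `v`: a sequence of darts, consecutive ones sharing endpoints. -/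
inductive Walk (G : MixedMultigraph) : G.V → G.V → Type
  | nil (u : G.V) : Walk G u u
  | cons {w : G.V} (d : G.Dart) (p : Walk G d.snd w) : Walk G d.fst w

namespace Walk

variable {G : MixedMultigraph}

/-- The number of edges of a walk. -/
def length {u v : G.V} : G.Walk u v → ℕ
  | .nil _ => 0
  | .cons _ p => p.length + 1

/-- The list of edges traversed by a walk. -/
def edges {u v : G.V} : G.Walk u v → List G.E
  | .nil _ => []
  | .cons d p => d.edge :: p.edges

/-- The list of darts of a walk. -/
def darts {u v : G.V} : G.Walk u v → List G.Dart
  | .nil _ => []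
  | .cons d p => d :: p.darts

/-- The list of vertices visited by a walk (in order, including both ends). -/
def support {u v : G.V} : G.Walk u v → List G.V
  | .nil u => [u]
  | .cons d p => d.fst :: p.support

/-- A path is a walk with no repeated vertices. -/
def IsPath {u v : G.V} (p : G.Walk u v) : Prop := p.support.Nodup

/-- A cycle is a nonempty closed walk with no repeated edges whose only
repeated vertex is its common first and last vertex. -/
def IsCycle {u : G.V} (p : G.Walk u u) : Prop :=
  0 < p.length ∧ p.edges.Nodup ∧ p.support.tail.Nodup

/-- Two vertices are consecutive on a walk if some dart of the walk joins them. -/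
def Consecutive {u v : G.V} (p : G.Walk u v) (x y : G.V) : Prop :=
  ∃ d ∈ p.darts, (d.fst = x ∧ d.snd = y) ∨ (d.fst = y ∧ d.snd = x)

/-- A chord of a cycle: an edge not on the cycle joining two distinct,
non-consecutive vertices of the cycle. -/
def IsChord {u : G.V} (p : G.Walk u u) (e : G.E) : Prop :=
  e ∉ p.edges ∧ G.src e ∈ p.support ∧ G.dst e ∈ p.support ∧
    G.src e ≠ G.dst e ∧ ¬ p.Consecutive (G.src e) (G.dst e)

end Walk

/-- The distance from `u` to `v`: the least length of a walk from `u` to `v`. -/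
noncomputable def dist (G : MixedMultigraph) (u v : G.V) : ℕ :=
  sInf {n | ∃ p : G.Walk u v, p.length = n}

/-- The eccentricity of a vertex `u`. -/
noncomputable def ecc (G : MixedMultigraph) (u : G.V) : ℕ :=
  sSup {n | ∃ v : G.V, n = max (G.dist u v) (G.dist v u)}

/-- The radius: the minimum eccentricity over all vertices. -/
noncomputable def radius (G : MixedMultigraph) : ℕ :=
  sInf {n | ∃ u : G.V, n = G.ecc u}

/-- The diameter: the maximum distance over all ordered pairs of vertices. -/
noncomputable def diam (G : MixedMultigraph) : ℕ :=
  sSup {n | ∃ u v : G.V, n = G.dist u v}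

/-- A mixed multigraph is strongly connected if there is a walk from every
vertex to every other vertex. -/
def StronglyConnected (G : MixedMultigraph) : Prop :=
  ∀ u v : G.V, Nonempty (G.Walk u v)

/-- The mixed multigraph obtained by deleting the edge `e₀`. -/
noncomputable def deleteEdge (G : MixedMultigraph) (e₀ : G.E) : MixedMultigraph :=
  letI := Classical.decEq G.E
  { V := G.V
    E := {e : G.E // e ≠ e₀}
    fintV := G.fintV
    fintE := inferInstance
    src := fun e => G.src e.1
    dst := fun e => G.dst e.1
    directed := fun e => G.directed e.1 }

/-- A mixed multigraph is bridgeless if it has no bridge. A bridge is an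
undirected edge whose removal destroys strong connectivity. -/
def Bridgeless (G : MixedMultigraph) : Prop :=
  ∀ e : G.E, G.directed e = false → (G.deleteEdge e).StronglyConnected

/-- An orientation: each undirected edge is assigned exactly one of its two
directions (`flip e = true` reverses the stored endpoints); directed edges stay. -/
structure Orientation (G : MixedMultigraph) where
  flip : G.E → Bool
  flip_dir : ∀ e : G.E, G.directed e = true → flip e = false

/-- The digraph resulting from an orientation. -/
def Orientation.graph {G : MixedMultigraph} (o : G.Orientation) : MixedMultigraph :=
  { V := G.V
    E := G.E
    fintV := G.fintV
    fintE := G.fintE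
    src := fun e => if o.flip e then G.dst e else G.src e
    dst := fun e => if o.flip e then G.src e else G.dst e
    directed := fun _ => true }

/-- Edge `e` lies on a cycle of length at most `L`. -/
def EdgeOnCycleLE (G : MixedMultigraph) (e : G.E) (L : ℕ) : Prop :=
  ∃ (u : G.V) (p : G.Walk u u), p.IsCycle ∧ e ∈ p.edges ∧ p.length ≤ L

/-- A mixed multigraph is `k`-chordal if every cycle of length more than `k`
has a chord. -/
def KChordal (G : MixedMultigraph) (k : ℕ) : Prop :=
  ∀ (u : G.V) (p : G.Walk u u), p.IsCycle → k < p.length → ∃ e : G.E, p.IsChord e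

/-- The closed neighbourhood `N[u]`: `u` together with all its in-neighbours,
out-neighbours and undirected neighbours. -/
def closedNbhd (G : MixedMultigraph) (u : G.V) : Set G.V :=
  {u} ∪ {v | ∃ e : G.E, (G.src e = u ∧ G.dst e = v) ∨ (G.src e = v ∧ G.dst e = u)}

/-- A subgraph: a subset of the vertices together with a subset of the edges
having both endpoints in that vertex subset. -/
structure Subgraph (G : MixedMultigraph) where
  verts : Finset G.V
  edges : Finset G.E
  src_mem : ∀ e ∈ edges, G.src e ∈ verts
  dst_mem : ∀ e ∈ edges, G.dst e ∈ verts

/-- A subgraph viewed as a mixed multigraph in its own right. -/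
def Subgraph.toGraph {G : MixedMultigraph} (H : G.Subgraph) : MixedMultigraph :=
  { V := {v : G.V // v ∈ H.verts}
    E := {e : G.E // e ∈ H.edges}
    fintV := FinsetCoe.fintype _
    fintE := FinsetCoe.fintype _
    src := fun e => ⟨G.src e.1, H.src_mem e.1 e.2⟩
    dst := fun e => ⟨G.dst e.1, H.dst_mem e.1 e.2⟩
    directed := fun e => G.directed e.1 }

end MixedMultigraph

namespace ORB
open MixedMultigraph

abbrev A := Bool × Fin 3

/-- Valid vertices: address together with position on a path. -/
inductive Val : ℕ → List A → ℕ → Prop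
  | root (r : ℕ) : Val r [] 0
  | path (r : ℕ) (a : A) (j : ℕ) (h : j ≤ 2 * r) : Val (r + 1) [a] j
  | lift (r : ℕ) (a : A) (u : List A) (j : ℕ) (h : Val r u j) : Val (r + 1) (a :: u) j

inductive R : ℕ → List A → ℕ → List A → ℕ → Bool → Prop
  | lift (r : ℕ) (a : A) (u : List A) (j : ℕ) (u' : List A) (j' : ℕ) (d : Bool)
      (h : R r u j u' j' d) : R (r + 1) (a :: u) j (a :: u') j' d
  | spoke (r : ℕ) (a : A) : R (r + 1) [] 0 [a] 0 false
  | fwd (r : ℕ) (a : A) (j : ℕ) (h : j + 1 ≤ 2 * r) : R (r + 1) [a] j [a] (j + 1) true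
  | fwdl (r : ℕ) (b : Bool) (i : Fin 3) : R (r + 1) [(b, i)] (2 * r) [(b, i + 1)] 0 true
  | bwd (r : ℕ) (a : A) (j : ℕ) (h : j + 1 ≤ 2 * r) (h' : j ≠ r) :
      R (r + 1) [a] (j + 1) [a] j true
  | bwdl (r : ℕ) (b : Bool) (i : Fin 3) (h : r ≠ 0) :
      R (r + 1) [(b, i + 1)] 0 [(b, i)] (2 * r) true

theorem Val.bound {r u j} (h : Val r u j) : u.length ≤ r ∧ j ≤ 2 * r := by
  induction h with
  | root r => simp
  | path r a j h => simp; omega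
  | lift r a u j h ih => simp; omega

theorem R.val {r u j u' j' d} (h : R r u j u' j' d) : Val r u j ∧ Val r u' j' := by
  induction h with
  | lift r a u j u' j' d h ih => exact ⟨.lift _ _ _ _ ih.1, .lift _ _ _ _ ih.2⟩
  | spoke r a => exact ⟨.root _, .path _ _ _ (by omega)⟩
  | fwd r a j h => exact ⟨.path _ _ _ (by omega), .path _ _ _ (by omega)⟩
  | fwdl r b i => exact ⟨.path _ _ _ (by omega), .path _ _ _ (by omega)⟩
  | bwd r a j h h' => exact ⟨.path _ _ _ (by omega), .path _ _ _ (by omega)⟩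
  | bwdl r b i h => exact ⟨.path _ _ _ (by omega), .path _ _ _ (by omega)⟩

theorem Val.nil {r u j} (h : Val r u j) : u = [] → j = 0 := by
  cases h <;> simp

theorem R.false_eq {r u j u' j' d} (h : R r u j u' j' d) (hd : d = false) :
    j = 0 ∧ j' = 0 ∧ u = u'.dropLast ∧ u' ≠ [] := by
  induction h with
  | lift r a u j u' j' d h ih =>
    obtain ⟨h1, h2, h3, h4⟩ := ih hd
    refine ⟨h1, h2, ?_, by simp⟩
    rw [List.dropLast_cons_of_ne_nil h4, h3]
  | spoke r a => simp
  | _ => simp at hd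

theorem R.len {r u j u' j' d} (h : R r u j u' j' d) :
    u'.length = u.length ∨ u'.length = u.length + 1 := by
  induction h with
  | lift r a u j u' j' d h ih => simpa using ih
  | _ => simp

theorem R.head {r u j u' j' d} (h : R r u j u' j' d) :
    (u = [] ∧ u'.length = 1) ∨ ∃ b i i' w w', u = (b, i) :: w ∧ u' = (b, i') :: w' := by
  cases h with
  | lift r a u j u' j' d h => right; exact ⟨a.1, a.2, a.2, u, u', rfl, rfl⟩
  | spoke r a => simp
  | fwd r a j h => right; exact ⟨a.1, a.2, a.2, [], [], rfl, rfl⟩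
  | fwdl r b i => right; exact ⟨b, _, _, [], [], rfl, rfl⟩
  | bwd r a j h h' => right; exact ⟨a.1, a.2, a.2, [], [], rfl, rfl⟩
  | bwdl r b i h => right; exact ⟨b, _, _, [], [], rfl, rfl⟩

/-! ### Potentials -/

def Le (σ : Bool) (x y : ℤ) : Prop := if σ then x ≤ y + 1 else y ≤ x + 1

open Classical in
def Pot (r : ℕ) (σ : Bool) (O : List A → Prop) (φ : List A → ℕ → ℤ) : Prop :=
  ∀ u j u' j' d, R r u j u' j' d →
    (d = true → Le σ (φ u j) (φ u' j')) ∧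
    (d = false → (O u' → Le σ (φ u j) (φ u' j')) ∧ (¬ O u' → Le σ (φ u' j') (φ u j)))

def Bdd (r : ℕ) (O : List A → Prop) : Prop :=
  ∀ u j, Val r u j → ∀ σ, ∃ M : ℤ, ∀ φ, Pot r σ O φ → φ [] 0 = 0 → φ u j ≤ M

def ext (P : A → ℕ → ℤ) (C : A → List A → ℕ → ℤ) : List A → ℕ → ℤ
  | [], _ => 0
  | [a], j => P a j
  | a :: x :: w, j => P a 0 + C a (x :: w) j

theorem ext_lift {P C} {a : A} (hC : C a [] 0 = 0) {r : ℕ} {u : List A} {j : ℕ} (h : Val r u j) :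
    ext P C (a :: u) j = P a 0 + C a u j := by
  cases u with
  | nil =>
    have hj := h.nil rfl
    subst hj
    simp [ext, hC]
  | cons x w => rfl

theorem Le.add {σ x y} (K : ℤ) (h : Le σ x y) : Le σ (K + x) (K + y) := by
  unfold Le at *; split_ifs at * <;> omega

/-- The gadget condition at the root. -/
structure Gad (r : ℕ) (σ : Bool) (O : List A → Prop) (P : A → ℕ → ℤ) : Prop where
  fwd : ∀ a j, j + 1 ≤ 2 * r → Le σ (P a j) (P a (j+1))
  fwdl : ∀ b i, Le σ (P (b, i) (2 * r)) (P (b, i + 1) 0)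
  bwd : ∀ a j, j + 1 ≤ 2 * r → j ≠ r → Le σ (P a (j + 1)) (P a j)
  bwdl : ∀ b i, r ≠ 0 → Le σ (P (b, i + 1) 0) (P (b, i) (2 * r))
  out : ∀ a, O [a] → Le σ 0 (P a 0)
  inn : ∀ a, ¬ O [a] → Le σ (P a 0) 0

theorem pot_ext {r σ O P C} (hP : Gad r σ O P) (hC0 : ∀ a, C a [] 0 = 0)
    (hC : ∀ a, Pot r σ (fun u => O (a :: u)) (C a)) : Pot (r + 1) σ O (ext P C) := by
  intro u j u' j' d h
  cases h with
  | lift r a u j u' j' d h =>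
    have := hC a _ _ _ _ _ h
    rw [ext_lift (hC0 a) h.val.1, ext_lift (hC0 a) h.val.2]
    exact ⟨fun hd => (this.1 hd).add _, fun hd =>
      ⟨fun ho => ((this.2 hd).1 ho).add _, fun ho => ((this.2 hd).2 ho).add _⟩⟩
  | spoke r a => simpa [ext] using ⟨hP.out a, hP.inn a⟩
  | fwd r a j h => simpa [ext] using hP.fwd a j h
  | fwdl r b i => simpa [ext] using hP.fwdl b i
  | bwd r a j h h' => simpa [ext] using hP.bwd a _ h h'
  | bwdl r b i h => simpa [ext] using hP.bwdl b i h

theorem pot_zero (r σ O) : Pot r σ O (fun _ _ => 0) := by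
  intro u j u' j' d h
  simp [Le]

theorem gad_zero (r σ O) : Gad r σ O (fun _ _ => 0) := by
  constructor <;> simp [Le]

/-- Interpolation of the values `c` along the paths. -/
def path (r : ℕ) (σ : Bool) (c : Fin 3 → ℤ) (i : Fin 3) (j : ℕ) : ℤ :=
  if σ then
    if j ≤ r then max (c i - j) (min (c i) (c (i + 1))) else max (c i - j) (c (i + 1))
  else
    if j ≤ r then max (c (i + 1) - (2 * r + 1 - j)) (c i)
    else max (c (i + 1) - (2 * r + 1 - j)) (min (c i) (c (i + 1)))

def gp (r : ℕ) (σ : Bool) (b : Bool) (c : Fin 3 → ℤ) (a : A) (j : ℕ) : ℤ :=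
  if a.1 = b then path r σ c a.2 j else 0

def CC (r : ℕ) (σ : Bool) (c : Fin 3 → ℤ) : Prop :=
  ∀ i, if σ then c i ≤ c (i + 1) + (2 * r + 1) else c (i + 1) ≤ c i + (2 * r + 1)

theorem path_zero {r σ c} (hc : CC r σ c) (i) : path r σ c i 0 = c i := by
  have := hc i
  unfold path; cases σ <;> simp at * <;> omega

theorem gad_gp {r σ O b c} (hc : CC r σ c) (h0 : ∀ i, 0 ≤ c i)
    (hs : ∀ i, (if σ then ¬ O [(b, i)] else O [(b, i)]) → c i ≤ 1) :
    Gad r σ O (gp r σ b c) := by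
  constructor
  · rintro ⟨b', i⟩ j h
    have := hc i
    unfold gp path Le; cases σ <;> simp at * <;> split_ifs <;> push_cast <;> omega
  · rintro b' i
    have := hc i
    have h2 := path_zero hc (i + 1)
    unfold gp; simp only [h2]
    unfold path Le; cases σ <;> simp at * <;> split_ifs <;> push_cast <;> omega
  · rintro ⟨b', i⟩ j h h'
    have := hc i
    unfold gp path Le; cases σ <;> simp at * <;> split_ifs <;> push_cast <;> omega
  · rintro b' i h
    have := hc i
    have h2 := path_zero hc (i + 1)
    unfold gp; simp only [h2]
    unfold path Le; cases σ <;> simp at * <;> split_ifs <;> push_cast <;> omega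
  · rintro ⟨b', i⟩ h
    have h2 := path_zero hc i
    have h3 := h0 i
    have h4 := hs i
    unfold gp; simp only [h2]
    unfold Le; cases σ <;> simp at h4 ⊢ <;> split_ifs <;> first | omega | (have := h4 (by simp_all); omega)
  · rintro ⟨b', i⟩ h
    have h2 := path_zero hc i
    have h3 := h0 i
    have h4 := hs i
    unfold gp; simp only [h2]
    unfold Le; cases σ <;> simp at h4 ⊢ <;> split_ifs <;> first | omega | (have := h4 (by simp_all); omega)

theorem Bdd.sub {r O} (h : Bdd (r + 1) O) (a : A) : Bdd r (fun u => O (a :: u)) := by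
  classical
  intro u j hv σ
  obtain ⟨M, hM⟩ := h (a :: u) j (.lift _ _ _ _ hv) σ
  refine ⟨M, fun φ hφ h0 => ?_⟩
  have := hM (ext (fun _ _ => 0) (fun a' => if a' = a then φ else fun _ _ => 0))
    (pot_ext (gad_zero _ _ _) (by intro a'; split_ifs <;> simp [h0])
      (by intro a'; split_ifs with h
          · subst h; exact hφ
          · exact pot_zero _ _ _)) rfl
  rw [ext_lift (by simp [h0]) hv] at this
  simpa using this

theorem Bdd.nc {r O} (h : Bdd (r + 1) O) (b σ : Bool) :
    ∃ i, ¬ (if σ then ¬ O [(b, i)] else O [(b, i)]) := by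
  by_contra! hcon
  obtain ⟨M, hM⟩ := h [(b, 0)] 0 (.path _ _ _ (by omega)) (!σ)
  have hc : CC r (!σ) (fun _ => max (M + 1) 0) := by
    intro i; cases σ <;> simp <;> omega
  have := hM (ext (gp r (!σ) b (fun _ => max (M + 1) 0)) (fun _ _ _ => 0))
    (pot_ext (gad_gp hc (by simp) (by
      intro i hi; have := hcon i; cases σ <;> simp_all)) (by simp) (fun _ => pot_zero _ _ _)) rfl
  simp only [ext, gp, if_true, path_zero hc] at this
  omega

theorem claimA : ∀ r O, Bdd r O → ∀ σ, ∃ φ, Pot r σ O φ ∧ φ [] 0 = 0 ∧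
    ∃ u, Val r u 0 ∧ (r : ℤ) ^ 2 + r ≤ φ u 0 := by
  intro r
  induction r with
  | zero => exact fun O _ σ => ⟨_, pot_zero _ _ _, rfl, [], .root _, by simp⟩
  | succ r ih =>
    intro O hO σ
    have := fun a => ih _ (hO.sub a) σ
    choose C hC hC0 u hu hCu using this
    obtain ⟨i, hi⟩ := hO.nc true σ
    let c : Fin 3 → ℤ := fun x => if x = i then 2 * r + 2 else 1
    have hc : CC r σ c := by
      intro x; simp only [c]; split_ifs <;> omega
    refine ⟨ext (gp r σ true c) C, pot_ext (gad_gp hc ?_ ?_) hC0 hC, rfl,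
      (true, i) :: u (true, i), .lift _ _ _ _ (hu _), ?_⟩
    · intro x; simp only [c]; split_ifs <;> omega
    · intro x hx; simp only [c]; split_ifs with h
      · subst h; exact absurd hx hi
      · omega
    · rw [ext_lift (hC0 _) (hu _)]
      have := hCu (true, i)
      simp only [gp, if_true, path_zero hc, c]
      push_cast
      linarith

theorem fin3 (f : Fin 3 → Bool) : ∃ i, f i = f (i + 1) := by
  revert f; decide

theorem claimB {r O} (hO : Bdd (r + 1) O) (b : Bool) : ∃ σ φ, Pot (r + 1) σ O φ ∧
    φ [] 0 = 0 ∧ (∀ b' i w j, b' ≠ b → φ ((b', i) :: w) j = 0) ∧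
    ∃ u, Val (r + 1) u 0 ∧ (r + 1 : ℤ) ^ 2 + 3 * (r + 1) - 1 ≤ φ u 0 := by
  classical
  obtain ⟨i, hi⟩ := fin3 (fun i => decide (O [(b, i)]))
  have hi' : O [(b, i)] ↔ O [(b, i + 1)] := by simpa using hi
  obtain ⟨σ, hσ⟩ : ∃ σ : Bool, ¬ (if σ then ¬ O [(b, i)] else O [(b, i)]) := by
    by_cases h : O [(b, i)]
    · exact ⟨true, by simpa using h⟩
    · exact ⟨false, by simpa using h⟩
  have hσ2 : ¬ (if σ then ¬ O [(b, i+1)] else O [(b, i+1)]) := by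
    rwa [← hi']
  have := fun a => claimA r _ (hO.sub a) σ
  choose C hC hC0 u hu hCu using this
  let i0 : Fin 3 := if σ then i else i + 1
  let i1 : Fin 3 := if σ then i + 1 else i
  have h01 : i0 ≠ i1 := by simp only [i0, i1]; cases σ <;> simp
  let c : Fin 3 → ℤ := fun x => if x = i0 then 4 * r + 3 else if x = i1 then 2 * r + 2 else 1
  have hc : CC r σ c := by
    intro x; simp only [c, i0, i1]; clear * -
    cases σ <;> fin_cases x <;> fin_cases i <;> simp <;> omega
  refine ⟨σ, ext (gp r σ b c) (fun a => if a.1 = b then C a else fun _ _ => 0),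
    pot_ext (gad_gp hc ?_ ?_) ?_ ?_, rfl, ?_, (b, i0) :: u (b, i0), .lift _ _ _ _ (hu _), ?_⟩
  · intro x; simp only [c]; split_ifs <;> omega
  · intro x hx
    have h1 : x ≠ i := by rintro rfl; exact hσ hx
    have h2 : x ≠ i + 1 := by rintro rfl; exact hσ2 hx
    have : c x = 1 := by simp only [c, i0, i1]; cases σ <;> simp [h1, h2]
    omega
  · intro a; split_ifs <;> simp [hC0]
  · intro a; split_ifs
    · exact hC a
    · exact pot_zero _ _ _
  · intro b' x w j hb
    cases w <;> simp [ext, gp, hb]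
  · rw [ext_lift (by simp [hC0]) (hu _)]
    have := hCu (b, i0)
    simp only [gp, if_true, path_zero hc, c]
    linarith

/-! ### Chains -/

inductive N {α : Type} (B : α → α → Prop) : ℕ → α → α → Prop
  | refl (x : α) : N B 0 x x
  | cons {n : ℕ} {x y z : α} (h : B x y) (p : N B n y z) : N B (n + 1) x z

theorem N.trans {α : Type} {B : α → α → Prop} {n m x y z} (h : N B n x y) (h' : N B m y z) :
    N B (n + m) x z := by
  induction h with
  | refl x => simpa using h'
  | @cons n x y z h p ih => rw [Nat.add_right_comm]; exact .cons h (ih h')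

theorem N.single {α : Type} {B : α → α → Prop} {x y} (h : B x y) : N B 1 x y := .cons h (.refl _)

theorem N.map {α β : Type} {B : α → α → Prop} {B' : β → β → Prop} (f : α → β)
    (hf : ∀ x y, B x y → B' (f x) (f y)) {n x y} (h : N B n x y) : N B' n (f x) (f y) := by
  induction h with
  | refl x => exact .refl _
  | cons h p ih => exact .cons (hf _ _ h) ih

theorem N.symm {α : Type} {B : α → α → Prop} (hB : ∀ x y, B x y → B y x) {n x y}
    (h : N B n x y) : N B n y x := by
  induction h with
  | refl x => exact .refl _
  | cons h p ih => exact ih.trans (.single (hB _ _ h))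

abbrev X := List A × ℕ

def S (r : ℕ) (x y : X) : Prop :=
  (R r x.1 x.2 y.1 y.2 true ∧ R r y.1 y.2 x.1 x.2 true) ∨
    R r x.1 x.2 y.1 y.2 false ∨ R r y.1 y.2 x.1 x.2 false

theorem S.symm {r} (x y : X) (h : S r x y) : S r y x := by
  unfold S at *; tauto

theorem S.lift {r} (a : A) (x y : X) (h : S r x y) :
    S (r + 1) (a :: x.1, x.2) (a :: y.1, y.2) := by
  rcases h with h | h | h
  · exact .inl ⟨.lift _ _ _ _ _ _ _ h.1, .lift _ _ _ _ _ _ _ h.2⟩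
  · exact .inr (.inl (.lift _ _ _ _ _ _ _ h))
  · exact .inr (.inr (.lift _ _ _ _ _ _ _ h))

theorem short_lo {r a} : ∀ j, j ≤ r → N (S (r + 1)) j ([a], j) ([a], 0) := by
  intro j
  induction j with
  | zero => intro _; exact .refl _
  | succ j ih =>
    intro h
    exact .cons (.inl ⟨.bwd _ _ _ (by omega) (by omega), .fwd _ _ _ (by omega)⟩) (ih (by omega))

theorem short_hi {r b i} (n : ℕ) : ∀ j, r < j → j + n = 2 * r →
    N (S (r + 1)) (n + 1) ([(b, i)], j) ([(b, i + 1)], 0) := by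
  induction n with
  | zero =>
    intro j h h'
    obtain rfl : j = 2 * r := by omega
    exact .single (.inl ⟨.fwdl _ _ _, .bwdl _ _ _ (by omega)⟩)
  | succ n ih =>
    intro j h h'
    exact .cons (.inl ⟨.fwd _ _ _ (by omega), .bwd _ _ _ (by omega) (by omega)⟩)
      (ih (j + 1) (by omega) (by omega))

theorem short {r u j} (h : Val r u j) : ∃ n ≤ r, N (S r) n (u, j) ([], 0) := by
  induction h with
  | root r => exact ⟨0, by omega, .refl _⟩
  | path r a j h =>
    have sp : ∀ a, N (S (r + 1)) 1 ([a], 0) ([], 0) := fun a => .single (.inr (.inr (.spoke _ _)))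
    by_cases hj : j ≤ r
    · exact ⟨j + 1, by omega, (short_lo j hj).trans (sp _)⟩
    · obtain ⟨b, i⟩ := a
      exact ⟨_, by omega, (short_hi (2 * r - j) j (by omega) (by omega)).trans (sp _)⟩
  | lift r a u j h ih =>
    obtain ⟨n, hn, h⟩ := ih
    exact ⟨n + 1, by omega, (h.map (fun x => (a :: x.1, x.2)) (S.lift a)).trans
      (.single (.inr (.inr (.spoke _ _))))⟩

def T (r : ℕ) (u0 : List A) (x y : X) : Prop :=
  R r x.1 x.2 y.1 y.2 true ∨ (R r x.1 x.2 y.1 y.2 false ∧ y.1 ≠ u0) ∨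
    (R r y.1 y.2 x.1 x.2 false ∧ x.1 ≠ u0)

def Re (r : ℕ) (u0 : List A) (x y : X) : Prop := ∃ n, N (T r u0) n x y

theorem Re.trans {r u0 x y z} (h : Re r u0 x y) (h' : Re r u0 y z) : Re r u0 x z := by
  obtain ⟨n, h⟩ := h
  obtain ⟨m, h'⟩ := h'
  exact ⟨_, h.trans h'⟩

theorem Re.single {r u0 x y} (h : T r u0 x y) : Re r u0 x y := ⟨_, .single h⟩

theorem T.lift {r} (a : A) (u0 : List A) : ∃ w, ∀ x y, T r w x y →
    T (r + 1) u0 (a :: x.1, x.2) (a :: y.1, y.2) := by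
  have key : ∃ w, ∀ v : List A, v ≠ [] → v ≠ w → a :: v ≠ u0 := by
    by_cases h : ∃ w, u0 = a :: w
    · obtain ⟨w, rfl⟩ := h
      exact ⟨w, fun v _ hv => by simpa using hv⟩
    · exact ⟨[], fun v _ _ hv => h ⟨v, hv.symm⟩⟩
  obtain ⟨w, hw⟩ := key
  refine ⟨w, fun x y h => ?_⟩
  rcases h with h | h | h
  · exact .inl (.lift _ _ _ _ _ _ _ h)
  · exact .inr (.inl ⟨.lift _ _ _ _ _ _ _ h.1, hw _ (h.1.false_eq rfl).2.2.2 h.2⟩)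
  · exact .inr (.inr ⟨.lift _ _ _ _ _ _ _ h.1, hw _ (h.1.false_eq rfl).2.2.2 h.2⟩)

theorem go_fwd {r u0 a} (j n : ℕ) : j + n ≤ 2 * r → Re (r + 1) u0 ([a], j) ([a], j + n) := by
  induction n with
  | zero => intro _; exact ⟨0, .refl _⟩
  | succ n ih => intro h; exact (ih (by omega)).trans (.single (.inl (.fwd _ _ _ (by omega))))

theorem go_next {r u0 b i} (j : ℕ) (h : j ≤ 2 * r) :
    Re (r + 1) u0 ([(b, i)], j) ([(b, i + 1)], 0) := by
  have := go_fwd (u0 := u0) (a := (b, i)) (r := r) j (2 * r - j) (by omega)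
  rw [show j + (2 * r - j) = 2 * r by omega] at this
  exact this.trans (.single (.inl (.fwdl _ _ _)))

theorem gad_to {r u0 a} (j : ℕ) (h : j ≤ 2 * r) : Re (r + 1) u0 ([a], j) ([], 0) := by
  obtain ⟨b, i⟩ := a
  refine (go_next j h).trans ?_
  by_cases h0 : [(b, i + 1)] = u0
  · refine (go_next 0 (by omega)).trans (.single (.inr (.inr ⟨.spoke _ _, ?_⟩)))
    subst h0; simp
  · exact .single (.inr (.inr ⟨.spoke _ _, h0⟩))

theorem gad_from {r u0 a} (j : ℕ) (h : j ≤ 2 * r) : Re (r + 1) u0 ([], 0) ([a], j) := by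
  obtain ⟨b, i⟩ := a
  have := go_fwd (u0 := u0) (a := (b, i)) (r := r) 0 j (by omega)
  rw [Nat.zero_add] at this
  refine Re.trans ?_ this
  by_cases h0 : [(b, i)] = u0
  · have h1 := go_next (r := r) (u0 := u0) (b := b) (i := i - 1) 0 (by omega)
    rw [sub_add_cancel] at h1
    refine Re.trans (.single (.inr (.inl ⟨.spoke _ _, ?_⟩))) h1
    subst h0; simp
  · exact .single (.inr (.inl ⟨.spoke _ _, h0⟩))

theorem conn {r u j} (h : Val r u j) : ∀ u0, Re r u0 (u, j) ([], 0) ∧ Re r u0 ([], 0) (u, j) := by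
  induction h with
  | root r => exact fun u0 => ⟨⟨0, .refl _⟩, ⟨0, .refl _⟩⟩
  | path r a j h => exact fun u0 => ⟨gad_to j h, gad_from j h⟩
  | lift r a u j h ih =>
    intro u0
    obtain ⟨w, hw⟩ := T.lift (r := r) a u0
    obtain ⟨⟨n, h1⟩, ⟨m, h2⟩⟩ := ih w
    have h1 := h1.map (fun x => (a :: x.1, x.2)) hw
    have h2 := h2.map (fun x => (a :: x.1, x.2)) hw
    exact ⟨Re.trans ⟨_, h1⟩ (gad_to 0 (by omega)), Re.trans (gad_from 0 (by omega)) ⟨_, h2⟩⟩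

/-! ### General facts on mixed multigraphs -/

def Step (G : MixedMultigraph) (x y : G.V) : Prop := ∃ d : G.Dart, d.fst = x ∧ d.snd = y

theorem walk_of_N {G : MixedMultigraph} {n x y} (h : N (Step G) n x y) :
    ∃ p : G.Walk x y, p.length = n := by
  induction h with
  | refl x => exact ⟨.nil _, rfl⟩
  | cons h p ih =>
    obtain ⟨d, rfl, rfl⟩ := h
    obtain ⟨p, hp⟩ := ih
    exact ⟨.cons d p, by simp [Walk.length, hp]⟩

theorem walk_pot {G : MixedMultigraph} (φ : G.V → ℤ) (h : ∀ x y, Step G x y → φ x ≤ φ y + 1)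
    {x y} (p : G.Walk x y) : φ x ≤ φ y + p.length := by
  induction p with
  | nil => simp [Walk.length]
  | cons d p ih =>
    have := h _ _ ⟨d, rfl, rfl⟩
    simp only [Walk.length]; push_cast; omega

theorem walk_pot' {G : MixedMultigraph} (φ : G.V → ℤ) (h : ∀ x y, Step G x y → φ y ≤ φ x + 1)
    {x y} (p : G.Walk x y) : φ y ≤ φ x + p.length := by
  have := walk_pot (fun x => - φ x) (fun x y hs => by have := h x y hs; omega) p
  omega

theorem exists_dist {G : MixedMultigraph} (hG : G.StronglyConnected) (x y : G.V) :
    ∃ p : G.Walk x y, p.length = G.dist x y := by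
  obtain ⟨p⟩ := hG x y
  exact Nat.sInf_mem (s := {n | ∃ p : G.Walk x y, p.length = n}) ⟨_, p, rfl⟩

theorem le_radius {G : MixedMultigraph} [Nonempty G.V] (n : ℕ)
    (h : ∀ u, ∃ v, n ≤ max (G.dist u v) (G.dist v u)) : n ≤ G.radius := by
  have u0 := Classical.arbitrary G.V
  refine le_csInf ⟨_, u0, rfl⟩ ?_
  rintro _ ⟨u, rfl⟩
  obtain ⟨v, hv⟩ := h u
  refine hv.trans (le_csSup ?_ ⟨v, rfl⟩)
  have : {n | ∃ v : G.V, n = max (G.dist u v) (G.dist v u)} =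
      Set.range (fun v => max (G.dist u v) (G.dist v u)) := by
    ext n; simp [eq_comm]
  rw [this]
  exact (Set.finite_range _).bddAbove

/-! ### The graph -/

def Ve (r : ℕ) : Type := {x : X // Val r x.1 x.2}

instance (r : ℕ) : Finite (Ve r) := by
  have : Set.Finite {x : X | Val r x.1 x.2} := by
    refine ((List.finite_length_le A r).prod (Set.finite_Iic (2 * r))).subset ?_
    intro x hx
    exact ⟨hx.bound.1, hx.bound.2⟩
  exact this.to_subtype

def Ed (r : ℕ) : Type :=
  {e : Ve r × Ve r × Bool // R r e.1.1.1 e.1.1.2 e.2.1.1.1 e.2.1.1.2 e.2.2}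

instance (r : ℕ) : Finite (Ed r) := by unfold Ed; infer_instance

noncomputable def Gr (r : ℕ) : MixedMultigraph :=
  { V := Ve r
    E := Ed r
    fintV := Fintype.ofFinite _
    fintE := Fintype.ofFinite _
    src := fun e => e.1.1
    dst := fun e => e.1.2.1
    directed := fun e => e.1.2.2 }

def rt (r : ℕ) : Ve r := ⟨([], 0), .root r⟩

theorem step_of_S {r} {x y : Ve r} (h : S r x.1 y.1) : Step (Gr r) x y := by
  rcases h with h | h | h
  · exact ⟨⟨⟨(x, y, true), h.1⟩, false, by simp⟩, rfl, rfl⟩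
  · exact ⟨⟨⟨(x, y, false), h⟩, false, by simp⟩, rfl, rfl⟩
  · exact ⟨⟨⟨(y, x, false), h⟩, true, fun _ => rfl⟩, rfl, rfl⟩

theorem step_of_T {r} {u0} {x y : Ve r} (h : T r u0 x.1 y.1) : Step (Gr r) x y := by
  rcases h with h | h | h
  · exact ⟨⟨⟨(x, y, true), h⟩, false, by simp⟩, rfl, rfl⟩
  · exact ⟨⟨⟨(x, y, false), h.1⟩, false, by simp⟩, rfl, rfl⟩
  · exact ⟨⟨⟨(y, x, false), h.1⟩, true, fun _ => rfl⟩, rfl, rfl⟩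

theorem step_del {r} {e : Ed r} (he : e.1.2.2 = false) {x y : Ve r}
    (h : T r e.1.2.1.1.1 x.1 y.1) : Step ((Gr r).deleteEdge e) x y := by
  rcases h with h | h | h
  · exact ⟨⟨⟨⟨(x, y, true), h⟩, by rintro rfl; simp at he⟩, false, by simp⟩, rfl, rfl⟩
  · exact ⟨⟨⟨⟨(x, y, false), h.1⟩, by intro he'; exact h.2 (by rw [← he'])⟩, false, by simp⟩, rfl, rfl⟩
  · exact ⟨⟨⟨⟨(y, x, false), h.1⟩, by intro he'; exact h.2 (by rw [← he'])⟩, true, fun _ => rfl⟩, rfl, rfl⟩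

theorem N_val {r} {B : X → X → Prop} {B' : Ve r → Ve r → Prop}
    (hB : ∀ x y : Ve r, B x.1 y.1 → B' x y) (hv : ∀ x y, B x y → Val r y.1 y.2)
    {n x y} (h : N B n x y) : ∀ hx hy, N B' n ⟨x, hx⟩ ⟨y, hy⟩ := by
  induction h with
  | refl x => intro _ _; exact .refl _
  | cons h p ih =>
    intro hx hy
    exact .cons (hB ⟨_, hx⟩ ⟨_, hv _ _ h⟩ h) (ih (hv _ _ h) hy)

theorem T.val {r u0} (x y : X) (h : T r u0 x y) : Val r y.1 y.2 := by
  rcases h with h | h | h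
  · exact h.val.2
  · exact h.1.val.2
  · exact h.1.val.1

theorem S.val {r} (x y : X) (h : S r x y) : Val r y.1 y.2 := by
  rcases h with h | h | h
  · exact h.1.val.2
  · exact h.val.2
  · exact h.val.1

theorem Re_all {r} (x y : Ve r) (u0) : Re r u0 x.1 y.1 :=
  (conn x.2 u0).1.trans (conn y.2 u0).2

theorem Gr_sc (r : ℕ) : (Gr r).StronglyConnected := by
  intro x y
  obtain ⟨n, h⟩ := Re_all x y []
  obtain ⟨p, -⟩ := walk_of_N (N_val (B' := Step (Gr r)) (fun _ _ h => step_of_T h) T.val h x.2 y.2)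
  exact ⟨p⟩

theorem Gr_bl (r : ℕ) : (Gr r).Bridgeless := by
  intro e he x y
  obtain ⟨n, h⟩ := Re_all (r := r) x y e.1.2.1.1.1
  obtain ⟨p, -⟩ := walk_of_N (N_val (B' := Step ((Gr r).deleteEdge e))
    (fun _ _ h => step_del he h) T.val h x.2 y.2)
  exact ⟨p⟩

def br (b : Bool) : List A → ℕ → ℤ
  | [], _ => 0
  | a :: u, _ => if a.1 = b then u.length + 1 else 0

theorem br_R {r u j u' j' d} (b : Bool) (h : R r u j u' j' d) :
    br b u j ≤ br b u' j' + 1 ∧ br b u' j' ≤ br b u j + 1 := by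
  have hl := h.len
  rcases h.head with ⟨rfl, h1⟩ | ⟨b', i, i', w, w', rfl, rfl⟩
  · cases u' with
    | nil => simp [br]
    | cons a u' => simp at h1; subst h1; simp [br]; split_ifs <;> simp
  · simp only [List.length_cons] at hl
    simp only [br]; split_ifs <;> omega

theorem val_rep (b : Bool) (r : ℕ) : Val r (List.replicate r (b, 0)) 0 := by
  induction r with
  | zero => exact .root _
  | succ r ih => exact .lift _ _ _ _ ih

/-- A branch not containing the given vertex. -/
theorem exists_branch (u : List A) : ∃ b, u = [] ∨ ∃ b' i w, u = (b', i) :: w ∧ b' ≠ b := by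
  cases u with
  | nil => exact ⟨true, .inl rfl⟩
  | cons a w => exact ⟨!a.1, .inr ⟨a.1, a.2, w, rfl, by simp⟩⟩

theorem step_cases {r} {x y : Ve r} (h : Step (Gr r) x y) :
    ∃ d, R r x.1.1 x.1.2 y.1.1 y.1.2 d ∨ R r y.1.1 y.1.2 x.1.1 x.1.2 d := by
  obtain ⟨⟨⟨⟨x', y', d⟩, h⟩, rev, ok⟩, h1, h2⟩ := h
  cases rev
  · obtain rfl : x' = x := h1
    obtain rfl : y' = y := h2
    exact ⟨d, .inl h⟩
  · obtain rfl : y' = x := h1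
    obtain rfl : x' = y := h2
    exact ⟨d, .inr h⟩

theorem Gr_radius (r : ℕ) : (Gr (r + 1)).radius = r + 1 := by
  have : Nonempty (Gr (r + 1)).V := ⟨rt _⟩
  apply le_antisymm
  · have h1 : (Gr (r + 1)).ecc (rt _) ≤ r + 1 := by
      refine csSup_le ⟨_, rt _, rfl⟩ ?_
      rintro _ ⟨v, rfl⟩
      obtain ⟨n, hn, h⟩ := short v.2
      have h' := N.symm S.symm h
      obtain ⟨p, hp⟩ := walk_of_N (N_val (B' := Step (Gr (r + 1)))
        (fun _ _ h => step_of_S h) S.val h v.2 (rt _).2)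
      obtain ⟨q, hq⟩ := walk_of_N (N_val (B' := Step (Gr (r + 1)))
        (fun _ _ h => step_of_S h) S.val h' (rt _).2 v.2)
      refine max_le (le_trans ?_ hn) (le_trans ?_ hn)
      · exact Nat.sInf_le ⟨q, hq⟩
      · exact Nat.sInf_le ⟨p, hp⟩
    exact (Nat.sInf_le ⟨rt _, rfl⟩ : (Gr (r + 1)).radius ≤ _).trans h1
  · apply le_radius
    intro u
    obtain ⟨b, hb⟩ := exists_branch u.1.1
    let v : Ve (r + 1) := ⟨(List.replicate (r + 1) (b, 0), 0), val_rep b _⟩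
    refine ⟨v, le_max_of_le_left ?_⟩
    obtain ⟨p, hp⟩ := exists_dist (Gr_sc (r + 1)) u v
    have := walk_pot' (G := Gr (r + 1)) (fun x => br b x.1.1 x.1.2) (fun x y h => by
      obtain ⟨d, h | h⟩ := step_cases h
      · exact (br_R b h).2
      · exact (br_R b h).1) p
    have hv : br b v.1.1 v.1.2 = r + 1 := by simp [v, br, List.replicate_succ]
    have hu : br b u.1.1 u.1.2 = 0 := by
      rcases hb with hb | ⟨b', i, w, hb, hne⟩
      · rw [hb]; rfl
      · rw [hb]; simp [br, hne]
    simp only [hv, hu, hp] at this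
    omega

/-! ### Orientations -/

def OO {r} (o : (Gr r).Orientation) (u : List A) : Prop :=
  ∃ e : Ed r, e.1.2.1.1.1 = u ∧ e.1.2.2 = false ∧ o.flip e = false

theorem OO_iff {r} (o : (Gr r).Orientation) (e : Ed r) (he : e.1.2.2 = false) :
    OO o e.1.2.1.1.1 ↔ o.flip e = false := by
  constructor
  · rintro ⟨e', h1, h2, h3⟩
    have : e' = e := by
      obtain ⟨⟨⟨⟨a, b⟩, h⟩, ⟨⟨c, d⟩, h'⟩, x⟩, hR⟩ := e
      obtain ⟨⟨⟨⟨a', b'⟩, g⟩, ⟨⟨c', d'⟩, g'⟩, x'⟩, gR⟩ := e'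
      simp only at h1 h2 he
      have k1 := gR.false_eq h2
      have k2 := hR.false_eq he
      simp only at k1 k2
      obtain ⟨rfl, rfl, rfl, -⟩ := k1
      obtain ⟨rfl, rfl, rfl, -⟩ := k2
      subst h1; subst h2; subst he
      rfl
    rwa [← this]
  · exact fun h => ⟨e, rfl, he, h⟩

theorem ostep {r} (o : (Gr r).Orientation) {σ φ} (hφ : Pot r σ (OO o) φ) {x y : Ve r}
    (h : Step o.graph x y) : Le σ (φ x.1.1 x.1.2) (φ y.1.1 y.1.2) := by
  obtain ⟨⟨e, rev, ok⟩, h1, h2⟩ := h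
  obtain rfl : rev = false := by
    cases rev
    · rfl
    · have h3 := ok rfl
      exact absurd h3 (by simp [Orientation.graph])
  replace h1 : (if o.flip e then (Gr r).dst e else (Gr r).src e) = x := h1
  replace h2 : (if o.flip e then (Gr r).src e else (Gr r).dst e) = y := h2
  have hp := hφ _ _ _ _ _ e.2
  have hiff := OO_iff o e
  have hdir := o.flip_dir e
  cases hd : e.1.2.2
  · have hiff := hiff hd
    have hp := hp.2 hd
    cases hf : o.flip e
    · rw [hf] at h1 h2
      subst h1 h2
      exact hp.1 (hiff.2 hf)
    · rw [hf] at h1 h2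
      subst h1 h2
      exact hp.2 (fun h => by rw [hiff.1 h] at hf; simp at hf)
  · rw [hdir hd] at h1 h2
    subst h1 h2
    exact hp.1 hd

theorem obdd {r} (o : (Gr r).Orientation) (ho : o.graph.StronglyConnected) : Bdd r (OO o) := by
  intro u j hv σ
  let x : Ve r := ⟨(u, j), hv⟩
  cases σ
  · obtain ⟨p⟩ := ho (rt r) x
    refine ⟨p.length, fun φ hφ h0 => ?_⟩
    have := walk_pot' (G := o.graph) (fun x : Ve r => φ x.1.1 x.1.2)
      (fun x y h => by simpa [Le] using ostep o hφ h) p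
    simp only [rt, x, h0, zero_add] at this
    exact this
  · obtain ⟨p⟩ := ho x (rt r)
    refine ⟨p.length, fun φ hφ h0 => ?_⟩
    have := walk_pot (G := o.graph) (fun x : Ve r => φ x.1.1 x.1.2)
      (fun x y h => by simpa [Le] using ostep o hφ h) p
    simp only [rt, x, h0, zero_add] at this
    exact this

theorem oradius {r} (o : (Gr (r + 1)).Orientation) (ho : o.graph.StronglyConnected) :
    (r + 1) ^ 2 + 3 * (r + 1) - 1 ≤ o.graph.radius := by
  have : Nonempty o.graph.V := ⟨rt (r + 1)⟩
  apply le_radius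
  intro y
  change Ve (r + 1) at y
  obtain ⟨b, hb⟩ := exists_branch y.1.1
  obtain ⟨σ, φ, hφ, h0, hz, u, hu, hN⟩ := claimB (obdd o ho) b
  have hy : φ y.1.1 y.1.2 = 0 := by
    rcases hb with hb | ⟨b', i, w, hb, hne⟩
    · have := y.2.nil hb
      rw [hb, this, h0]
    · rw [hb]; exact hz _ _ _ _ hne
  let x : Ve (r + 1) := ⟨(u, 0), hu⟩
  refine ⟨x, ?_⟩
  have key : ∀ n : ℕ, φ u 0 ≤ n → (r + 1) ^ 2 + 3 * (r + 1) - 1 ≤ n := by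
    intro n hn
    have := hN.trans hn
    have h2 : (r + 1) ^ 2 + 3 * (r + 1) ≤ n + 1 := by
      zify; linarith
    omega
  cases σ
  · apply le_max_of_le_left
    obtain ⟨p, hp⟩ := exists_dist ho y x
    have := walk_pot' (G := o.graph) (fun x : Ve (r + 1) => φ x.1.1 x.1.2)
      (fun x y h => by simpa [Le] using ostep o hφ h) p
    simp only [hy, hp] at this
    exact key _ (by simpa [x] using this)
  · apply le_max_of_le_right
    obtain ⟨p, hp⟩ := exists_dist ho x y
    have := walk_pot (G := o.graph) (fun x : Ve (r + 1) => φ x.1.1 x.1.2)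
      (fun x y h => by simpa [Le] using ostep o hφ h) p
    simp only [hy, hp] at this
    exact key _ (by simpa [x] using this)

end ORB

open MixedMultigraph in
/-- for every `r ≥ 1` there is a strongly connected bridgeless
mixed multigraph of radius `r` all of whose strongly connected orientations
have radius at least `r² + 3r − 1`. -/
theorem oriented_radius_lower_bound (r : ℕ) (hr : 1 ≤ r) :
    ∃ G : MixedMultigraph, G.StronglyConnected ∧ G.Bridgeless ∧ G.radius = r ∧
      ∀ o : G.Orientation, o.graph.StronglyConnected →
        r ^ 2 + 3 * r - 1 ≤ o.graph.radius := by
  obtain ⟨r, rfl⟩ : ∃ k, r = k + 1 := ⟨r - 1, by omega⟩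
  exact ⟨ORB.Gr (r + 1), ORB.Gr_sc _, ORB.Gr_bl _, ORB.Gr_radius r, fun o ho => ORB.oradius o ho⟩
end

section
/- For every positive integer r, there exists a strongly connected bridgeless mixed multigraph of radius r whose oriented radius is exactly r² + 3r − 1; that is, it has a strongly connected orientation of radius r² + 3r − 1, and every strongly connected orientation of it has radius at least r² + 3r − 1. -/
namespace ORad

inductive RW {V : Type} (R : V → V → Prop) : ℕ → V → V → Prop
  | refl (n : ℕ) (u : V) : RW R n u u
  | tail {n : ℕ} {u v w : V} : RW R n u v → R v w → RW R (n + 1) u w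

theorem RW.mono {V : Type} {R : V → V → Prop} {n m : ℕ} {u v : V} (h : RW R n u v) (hm : n ≤ m) :
    RW R m u v := by
  induction h generalizing m with
  | refl n u => exact RW.refl _ _
  | tail h1 h2 ih =>
    obtain ⟨k, rfl⟩ : ∃ k, m = k + 1 := ⟨m - 1, by omega⟩
    exact RW.tail (ih (by omega)) h2

theorem RW.trans {V : Type} {R : V → V → Prop} {n m : ℕ} {u v w : V} (h : RW R n u v)
    (h' : RW R m v w) : RW R (n + m) u w := by
  induction h' with
  | refl m u => exact h.mono (by omega)
  | tail h1 h2 ih => exact RW.tail (ih h) h2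

theorem RW.map {V V' : Type} {R : V → V → Prop} {R' : V' → V' → Prop} (g : V → V')
    (hg : ∀ u v, R u v → R' (g u) (g v)) {n : ℕ} {u v : V}
    (h : RW R n u v) : RW R' n (g u) (g v) := by
  induction h with
  | refl m u => exact RW.refl _ _
  | tail h1 h2 ih => exact RW.tail ih (hg _ _ h2)

theorem RW.flip {V : Type} {R : V → V → Prop} {n : ℕ} {u v : V} (h : RW R n u v) :
    RW (flip R) n v u := by
  induction h with
  | refl m u => exact RW.refl _ _
  | tail h1 h2 ih =>
    have : RW (_root_.flip R) 1 _ _ := RW.tail (RW.refl 0 _) h2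
    exact (this.trans ih).mono (by omega)

theorem RW.rtg {V : Type} {R : V → V → Prop} {n : ℕ} {u v : V} (h : RW R n u v) :
    Relation.ReflTransGen R u v := by
  induction h with
  | refl m u => exact .refl
  | tail h1 h2 ih => exact ih.tail h2

theorem rw_of_rtg {V : Type} {R : V → V → Prop} {u v : V} (h : Relation.ReflTransGen R u v) :
    ∃ n, RW R n u v := by
  induction h with
  | refl => exact ⟨0, .refl _ _⟩
  | tail h1 h2 ih => obtain ⟨n, hn⟩ := ih; exact ⟨n + 1, hn.tail h2⟩

theorem rtg_closed {V : Type} {R : V → V → Prop} (P : V → Prop) (hP : ∀ u v, R u v → P u → P v)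
    {u v : V} (h : Relation.ReflTransGen R u v) (hu : P u) : P v := by
  induction h with
  | refl => exact hu
  | tail h1 h2 ih => exact hP _ _ h2 ih

theorem rtg_lift {V V' : Type} {R : V → V → Prop} {R' : V' → V' → Prop} (g : V → V')
    (hg : ∀ u v, R u v → Relation.ReflTransGen R' (g u) (g v)) {u v : V}
    (h : Relation.ReflTransGen R u v) : Relation.ReflTransGen R' (g u) (g v) := by
  induction h with
  | refl => exact .refl
  | tail h1 h2 ih => exact ih.trans (hg _ _ h2)

def SC {V : Type} (R : V → V → Prop) : Prop := ∀ u v, Relation.ReflTransGen R u v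

theorem SC.flip {V : Type} {R : V → V → Prop} (h : SC R) : SC (flip R) := by
  intro u v
  obtain ⟨n, hn⟩ := rw_of_rtg (h v u)
  exact hn.flip.rtg

theorem SC.of_root {V : Type} {R : V → V → Prop} (c : V)
    (h : ∀ v, Relation.ReflTransGen R c v ∧ Relation.ReflTransGen R v c) : SC R :=
  fun u v => (h u).2.trans (h v).1

def Lip {V : Type} (R : V → V → Prop) (φ : V → ℕ) : Prop := ∀ u v, R u v → φ v ≤ φ u + 1

/-- base relation: root `none`, spokes, internal relation `R`. -/
def Bs {W J : Type} (R : W → W → Prop) (t : J → W) (o i : J → Prop) : Option W → Option W → Prop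
  | none, some w => ∃ j, o j ∧ t j = w
  | some w, none => ∃ j, i j ∧ t j = w
  | some w, some w' => R w w'
  | none, none => False

theorem Bs_flip {W J : Type} (R : W → W → Prop) (t : J → W) (o i : J → Prop) :
    flip (Bs R t o i) = Bs (flip R) t i o := by
  funext u v
  cases u <;> cases v <;> rfl

theorem Bs_lip {W J : Type} {R : W → W → Prop} {t : J → W} {o i : J → Prop} (φ : W → ℕ)
    (h1 : Lip R φ) (h2 : ∀ j, o j → φ (t j) ≤ 1) :
    Lip (Bs R t o i) (fun v => v.elim 0 φ) := by
  rintro (_ | u) (_ | v) h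
  · exact h.elim
  · obtain ⟨j, hj, rfl⟩ := h
    simpa using h2 j hj
  · simp
  · exact h1 _ _ h

theorem Bs_cert {W J : Type} {R : W → W → Prop} {t : J → W} {o i : J → Prop} (φ : W → ℕ)
    (h : ∀ w, (1 ≤ φ w ∧ ∃ j, o j ∧ t j = w) ∨ ∃ w', R w' w ∧ φ w' < φ w) (w : W) :
    RW (Bs R t o i) (φ w) none (some w) := by
  induction hn : φ w using Nat.strong_induction_on generalizing w with
  | _ n ih =>
    rcases h w with ⟨h1, hj⟩ | ⟨w', hw, hlt⟩
    · have : RW (Bs R t o i) 1 none (some w) := RW.tail (RW.refl 0 _) hj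
      exact this.mono (by omega)
    · have := ih (φ w') (by omega) w' rfl
      have h2 : RW (Bs R t o i) (φ w' + 1) none (some w) := RW.tail this hw
      exact h2.mono (by omega)

section hang
variable {W J W' : Type}

def iB : Option W → Option (W ⊕ J × W')
  | none => none
  | some w => some (.inl w)

def iK (t : J → W) (j : J) : Option W' → Option (W ⊕ J × W')
  | none => some (.inl (t j))
  | some k => some (.inr (j, k))

inductive NR (R : W → W → Prop) (t : J → W) (o i : J → Prop)
    (Q : J → Option W' → Option W' → Prop) :
    Option (W ⊕ J × W') → Option (W ⊕ J × W') → Prop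
  | base (u v : Option W) : Bs R t o i u v → NR R t o i Q (iB u) (iB v)
  | sub (j : J) (u v : Option W') : Q j u v → NR R t o i Q (iK t j u) (iK t j v)

theorem NR_flip (R : W → W → Prop) (t : J → W) (o i : J → Prop)
    (Q : J → Option W' → Option W' → Prop) {u v} (h : flip (NR R t o i Q) u v) :
    NR (flip R) t i o (fun j => flip (Q j)) u v := by
  cases h with
  | base u v h => exact NR.base _ _ (by rw [← Bs_flip]; exact h)
  | sub j u v h => exact NR.sub j _ _ h

def cpot (t : J → W) (φ : Option W → ℕ) (q : J → Option W' → ℕ) : Option (W ⊕ J × W') → ℕ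
  | none => φ none
  | some (.inl w) => φ (some w)
  | some (.inr (j, k)) => φ (some (t j)) + q j (some k)

theorem cpot_lip {R : W → W → Prop} {t : J → W} {o i : J → Prop}
    {Q : J → Option W' → Option W' → Prop} {φ : Option W → ℕ} {q : J → Option W' → ℕ}
    (h1 : Lip (Bs R t o i) φ) (h2 : ∀ j, Lip (Q j) (q j)) (h3 : ∀ j, q j none = 0) :
    Lip (NR R t o i Q) (cpot t φ q) := by
  have e1 : ∀ u, cpot t φ q (iB u) = φ u := by rintro (_ | u) <;> rfl
  have e2 : ∀ j u, cpot t φ q (iK t j u) = φ (some (t j)) + q j u := by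
    rintro j (_ | u)
    · simp [iK, cpot, h3]
    · rfl
  intro u v h
  cases h with
  | base u v h => rw [e1, e1]; exact h1 _ _ h
  | sub j u v h => rw [e2, e2]; have := h2 j _ _ h; omega

def pB (t : J → W) : Option (W ⊕ J × W') → Option W
  | none => none
  | some (.inl w) => some w
  | some (.inr (j, _)) => some (t j)

open Classical in
noncomputable def pK (j : J) : Option (W ⊕ J × W') → Option W'
  | none => none
  | some (.inl _) => none
  | some (.inr (j', k)) => if j' = j then some k else none

theorem NR_SC_base {R : W → W → Prop} {t : J → W} {o i : J → Prop}
    {Q : J → Option W' → Option W' → Prop} (h : SC (NR R t o i Q)) : SC (Bs R t o i) := by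
  have e1 : ∀ u : Option W, pB t (iB u : Option (W ⊕ J × W')) = u := by rintro (_ | u) <;> rfl
  have e2 : ∀ j (u : Option W'), pB t (iK t j u) = some (t j) := by rintro j (_ | u) <;> rfl
  intro u v
  have := rtg_lift (R' := Bs R t o i) (pB t) (fun a b hab => by
    cases hab with
    | base u v h => show Relation.ReflTransGen _ (pB t (iB u)) (pB t (iB v))
                    rw [e1, e1]; exact .single h
    | sub j u v h => show Relation.ReflTransGen _ (pB t (iK t j u)) (pB t (iK t j v))
                     rw [e2, e2]) (h (iB u) (iB v))
  rwa [e1, e1] at this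

theorem NR_SC_sub {R : W → W → Prop} {t : J → W} {o i : J → Prop}
    {Q : J → Option W' → Option W' → Prop} (h : SC (NR R t o i Q)) (j : J) : SC (Q j) := by
  have e1 : ∀ u : Option W, pK j (iB u : Option (W ⊕ J × W')) = none := by
    rintro (_ | u) <;> rfl
  have e2 : ∀ (u : Option W'), pK j (iK t j u) = u := by
    rintro (_ | u) <;> simp [iK, pK]
  have e3 : ∀ j' (u : Option W'), j' ≠ j → pK j (iK t j' u) = none := by
    rintro j' (_ | u) hj <;> simp [iK, pK, hj]
  intro u v
  have := rtg_lift (R' := Q j) (pK j) (fun a b hab => by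
    cases hab with
    | base u v h => show Relation.ReflTransGen _ (pK j (iB u)) (pK j (iB v))
                    rw [e1, e1]
    | sub j' u v h =>
      show Relation.ReflTransGen _ (pK j (iK t j' u)) (pK j (iK t j' v))
      by_cases hj : j' = j
      · subst hj; rw [e2, e2]; exact .single h
      · rw [e3 _ _ hj, e3 _ _ hj]) (h (iK t j u) (iK t j v))
  rwa [e2, e2] at this

theorem NR_RW_out {R : W → W → Prop} {t : J → W} {o i : J → Prop}
    {Q : J → Option W' → Option W' → Prop} {N M : ℕ} (φ : W → ℕ)
    (h1 : ∀ w, RW (Bs R t o i) (φ w) none (some w)) (h2 : ∀ j k, RW (Q j) M none k)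
    (h3 : ∀ w, φ w ≤ N) (h4 : ∀ j, φ (t j) + M ≤ N) (v) : RW (NR R t o i Q) N none v := by
  have a : ∀ w, RW (NR R t o i Q) (φ w) none (some (.inl w)) := fun w =>
    RW.map iB (fun u v h => NR.base u v h) (h1 w)
  rcases v with _ | w | ⟨j, k⟩
  · exact RW.refl _ _
  · exact (a w).mono (h3 w)
  · have b : RW (NR R t o i Q) M (some (.inl (t j))) (some (.inr (j, k))) :=
      RW.map (iK t j) (fun u v h => NR.sub j u v h) (h2 j (some k))
    exact ((a _).trans b).mono (h4 j)

theorem NR_RW_in {R : W → W → Prop} {t : J → W} {o i : J → Prop}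
    {Q : J → Option W' → Option W' → Prop} {N M : ℕ} (φ : W → ℕ)
    (h1 : ∀ w, RW (Bs R t o i) (φ w) (some w) none) (h2 : ∀ j k, RW (Q j) M k none)
    (h3 : ∀ w, φ w ≤ N) (h4 : ∀ j, φ (t j) + M ≤ N) (v) : RW (NR R t o i Q) N v none := by
  have := NR_RW_out (R := flip R) (t := t) (o := i) (i := o) (Q := fun j => flip (Q j)) φ
    (fun w => by rw [← Bs_flip]; exact (h1 w).flip) (fun j k => (h2 j k).flip) h3 h4 v
  exact RW.map id (fun u v h => NR_flip _ _ _ _ _ h) this.flip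

theorem NR_RTG {R : W → W → Prop} {t : J → W} {o i : J → Prop}
    {Q : J → Option W' → Option W' → Prop}
    (h1 : SC (Bs R t o i)) (h2 : ∀ j, SC (Q j)) : SC (NR R t o i Q) := by
  have a : ∀ u v, Relation.ReflTransGen (NR R t o i Q) (iB u) (iB v) := fun u v =>
    rtg_lift iB (fun u v h => .single (NR.base u v h)) (h1 u v)
  have b : ∀ j u v, Relation.ReflTransGen (NR R t o i Q) (iK t j u) (iK t j v) := fun j u v =>
    rtg_lift (iK t j) (fun u v h => .single (NR.sub j u v h)) (h2 j u v)
  apply SC.of_root none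
  rintro (_ | w | ⟨j, k⟩)
  · exact ⟨.refl, .refl⟩
  · exact ⟨a none (some w), a (some w) none⟩
  · exact ⟨(a none (some (t j))).trans (b j none (some k)),
      (b j (some k) none).trans (a (some (t j)) none)⟩

end hang

/-- rooted mixed multigraph -/
structure RG where
  W : Type
  E : Type
  finW : Finite W
  finE : Finite E
  src : E → Option W
  dst : E → Option W
  dir : E → Bool

namespace RG

def A (G : RG) (X : G.E → Prop) (u v : Option G.W) : Prop :=
  ∃ e, X e ∧ ((G.src e = u ∧ G.dst e = v) ∨ (G.dir e = false ∧ G.dst e = u ∧ G.src e = v))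

def O (G : RG) (f : G.E → Bool) (u v : Option G.W) : Prop :=
  ∃ e, (f e = false ∧ G.src e = u ∧ G.dst e = v) ∨ (f e = true ∧ G.dst e = u ∧ G.src e = v)

def Valid (G : RG) (f : G.E → Bool) : Prop := ∀ e, G.dir e = true → f e = false

structure Pre (G : RG) (n N : ℕ) : Prop where
  out : ∀ v, RW (G.A fun _ => True) n none v
  inn : ∀ v, RW (G.A fun _ => True) n v none
  br : ∀ e, G.dir e = false → SC (G.A (· ≠ e))
  up : ∃ f, G.Valid f ∧ ∀ v, RW (G.O f) N none v ∧ RW (G.O f) N v none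

structure Good (G : RG) (n N : ℕ) : Prop extends Pre G n N where
  low : ∀ f, G.Valid f → SC (G.O f) →
    (∃ φ, φ none = 0 ∧ Lip (G.O f) φ ∧ ∃ x, N ≤ φ x) ∧
    (∃ φ, φ none = 0 ∧ Lip (flip (G.O f)) φ ∧ ∃ x, N ≤ φ x)

structure Top (G : RG) (n N : ℕ) : Prop extends Pre G n N where
  low : ∀ f, G.Valid f → SC (G.O f) → ∀ v, ∃ φ, φ v = 0 ∧
    (Lip (G.O f) φ ∨ Lip (flip (G.O f)) φ) ∧ ∃ x, N ≤ φ x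
  rad : ∀ v, ∃ φ, φ v = 0 ∧ Lip (G.A fun _ => True) φ ∧ ∃ x, n ≤ φ x

def triv : RG := ⟨Empty, Empty, inferInstance, inferInstance, Empty.elim, Empty.elim, Empty.elim⟩

theorem triv_good : triv.Good 0 0 where
  out := by rintro (_ | ⟨⟨⟩⟩); exact .refl _ _
  inn := by rintro (_ | ⟨⟨⟩⟩); exact .refl _ _
  br := by rintro ⟨⟩
  up := ⟨fun _ => false, fun _ _ => rfl, by
    rintro (_ | ⟨⟨⟩⟩); exact ⟨.refl _ _, .refl _ _⟩⟩
  low := fun f _ _ => ⟨⟨fun _ => 0, rfl, fun _ _ _ => by simp, none, le_rfl⟩,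
    ⟨fun _ => 0, rfl, fun _ _ _ => by simp, none, le_rfl⟩⟩

def build {W J : Type} (hW : Finite W) (hJ : Finite J) (R : W → W → Prop) (t : J → W) (K : RG) :
    RG where
  W := W ⊕ J × K.W
  E := J ⊕ {p : W × W // R p.1 p.2} ⊕ J × K.E
  finW := by have := K.finW; infer_instance
  finE := by have := K.finE; infer_instance
  src := fun e => match e with
    | .inl _ => none
    | .inr (.inl p) => some (.inl p.1.1)
    | .inr (.inr (j, e)) => iK t j (K.src e)
  dst := fun e => match e with
    | .inl j => some (.inl (t j))
    | .inr (.inl p) => some (.inl p.1.2)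
    | .inr (.inr (j, e)) => iK t j (K.dst e)
  dir := fun e => match e with
    | .inl _ => false
    | .inr (.inl _) => true
    | .inr (.inr (_, e)) => K.dir e

section
variable {W J : Type} (hW : Finite W) (hJ : Finite J) (R : W → W → Prop) (t : J → W) (K : RG)

theorem build_A (X : (build hW hJ R t K).E → Prop)
    (o : J → Prop) (ho : ∀ j, o j → X (.inl j)) (hR : ∀ p, X (.inr (.inl p)))
    {u v} (h : NR R t o o (fun j => K.A (fun e => X (.inr (.inr (j, e))))) u v) :
    (build hW hJ R t K).A X u v := by
  cases h with
  | base u v h =>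
    rcases u with _ | u <;> rcases v with _ | v
    · exact h.elim
    · obtain ⟨j, hj, rfl⟩ := h
      exact ⟨.inl j, ho j hj, .inl ⟨rfl, rfl⟩⟩
    · obtain ⟨j, hj, rfl⟩ := h
      exact ⟨.inl j, ho j hj, .inr ⟨rfl, rfl, rfl⟩⟩
    · exact ⟨.inr (.inl ⟨(u, v), h⟩), hR _, .inl ⟨rfl, rfl⟩⟩
  | sub j u v h =>
    obtain ⟨e, he, h | h⟩ := h
    · exact ⟨.inr (.inr (j, e)), he, .inl ⟨by rw [← h.1]; rfl, by rw [← h.2]; rfl⟩⟩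
    · exact ⟨.inr (.inr (j, e)), he, .inr ⟨h.1, by rw [← h.2.1]; rfl, by rw [← h.2.2]; rfl⟩⟩

theorem build_A' {u v} (h : (build hW hJ R t K).A (fun _ => True) u v) :
    NR R t (fun _ => True) (fun _ => True) (fun j => K.A (fun _ => True)) u v := by
  obtain ⟨j | p | ⟨j, e⟩, -, ⟨rfl, rfl⟩ | ⟨hd, rfl, rfl⟩⟩ := h
  · exact NR.base none (some (t j)) ⟨j, trivial, rfl⟩
  · exact NR.base (some (t j)) none ⟨j, trivial, rfl⟩
  · exact NR.base (some p.1.1) (some p.1.2) p.2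
  · exact absurd hd (by simp [build])
  · exact NR.sub j _ _ ⟨e, trivial, .inl ⟨rfl, rfl⟩⟩
  · exact NR.sub j _ _ ⟨e, trivial, .inr ⟨hd, rfl, rfl⟩⟩

theorem build_O (f : (build hW hJ R t K).E → Bool) (hf : (build hW hJ R t K).Valid f) {u v}  :
    (build hW hJ R t K).O f u v ↔
    NR R t (fun j => f (.inl j) = false) (fun j => f (.inl j) = true)
      (fun j => K.O (fun e => f (.inr (.inr (j, e))))) u v := by
  constructor
  · rintro ⟨j | p | ⟨j, e⟩, ⟨hd, rfl, rfl⟩ | ⟨hd, rfl, rfl⟩⟩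
    · exact NR.base none (some (t j)) ⟨j, hd, rfl⟩
    · exact NR.base (some (t j)) none ⟨j, hd, rfl⟩
    · exact NR.base (some p.1.1) (some p.1.2) p.2
    · have := hf (.inr (.inl p)) rfl
      rw [hd] at this; cases this
    · exact NR.sub j _ _ ⟨e, .inl ⟨hd, rfl, rfl⟩⟩
    · exact NR.sub j _ _ ⟨e, .inr ⟨hd, rfl, rfl⟩⟩
  · intro h
    cases h with
    | base u v h =>
      rcases u with _ | u <;> rcases v with _ | v
      · exact h.elim
      · obtain ⟨j, hj, rfl⟩ := h
        exact ⟨.inl j, .inl ⟨hj, rfl, rfl⟩⟩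
      · obtain ⟨j, hj, rfl⟩ := h
        exact ⟨.inl j, .inr ⟨hj, rfl, rfl⟩⟩
      · exact ⟨.inr (.inl ⟨(u, v), h⟩), .inl ⟨hf _ rfl, rfl, rfl⟩⟩
    | sub j u v h =>
      obtain ⟨e, h | h⟩ := h
      · exact ⟨.inr (.inr (j, e)), .inl ⟨h.1, by rw [← h.2.1]; rfl, by rw [← h.2.2]; rfl⟩⟩
      · exact ⟨.inr (.inr (j, e)), .inr ⟨h.1, by rw [← h.2.1]; rfl, by rw [← h.2.2]; rfl⟩⟩

/-- the common part of both constructions -/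
theorem build_pre {n N n' N' : ℕ} (hK : K.Pre n N) (φ φi φo : W → ℕ)
    (s : J → Bool)
    (h1 : ∀ w, RW (Bs R t (fun _ => True) (fun _ => True)) (φ w) none (some w))
    (h2 : ∀ w, RW (Bs R t (fun _ => True) (fun _ => True)) (φ w) (some w) none)
    (h3 : ∀ w, φ w ≤ n') (h4 : ∀ j, φ (t j) + n ≤ n')
    (h5 : ∀ j, SC (Bs R t (· ≠ j) (· ≠ j)))
    (h6 : ∀ w, RW (Bs R t (fun j => s j = false) (fun j => s j = true)) (φo w) none (some w))
    (h7 : ∀ w, RW (Bs R t (fun j => s j = false) (fun j => s j = true)) (φi w) (some w) none)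
    (h8 : ∀ w, φo w ≤ N') (h9 : ∀ j, φo (t j) + N ≤ N')
    (h10 : ∀ w, φi w ≤ N') (h11 : ∀ j, φi (t j) + N ≤ N') :
    (build hW hJ R t K).Pre n' N' where
  out v := RW.map id (fun u v h => build_A hW hJ R t K _ (fun _ => True) (fun _ _ => trivial)
    (fun _ => trivial) h) (NR_RW_out φ h1 (fun _ k => hK.out k) h3 h4 v)
  inn v := RW.map id (fun u v h => build_A hW hJ R t K _ (fun _ => True) (fun _ _ => trivial)
    (fun _ => trivial) h) (NR_RW_in φ h2 (fun _ k => hK.inn k) h3 h4 v)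
  br e he := by
    have hKsc : SC (K.A fun _ => True) :=
      SC.of_root none fun v => ⟨(hK.out v).rtg, (hK.inn v).rtg⟩
    have hBsc : SC (Bs R t (fun _ => True) (fun _ => True)) := by
      apply SC.of_root none
      rintro (_ | w)
      · exact ⟨.refl, .refl⟩
      · exact ⟨(h1 w).rtg, (h2 w).rtg⟩
    rcases e with j | p | ⟨j, e⟩
    · have a := NR_RTG (Q := fun j' => K.A fun e' =>
        (Sum.inr (Sum.inr (j', e')) : (build hW hJ R t K).E) ≠ .inl j) (h5 j) (fun j' => by
          convert hKsc using 3
          simp)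
      intro u v
      exact rtg_lift id (fun u v h => .single (build_A hW hJ R t K (· ≠ .inl j) (· ≠ j)
        (fun j' hj h => hj (Sum.inl.inj h)) (fun p h => by cases h) h)) (a u v)
    · exact absurd he (by simp [build])
    · have a := NR_RTG (Q := fun j' => K.A fun e' =>
        (Sum.inr (Sum.inr (j', e')) : (build hW hJ R t K).E) ≠ .inr (.inr (j, e)))
          hBsc (fun j' => by
          by_cases hj : j' = j
          · subst hj
            convert hK.br e he using 3
            simp
          · convert hKsc using 3
            simp [hj])
      intro u v
      exact rtg_lift id (fun u v h => .single (build_A hW hJ R t K (· ≠ .inr (.inr (j, e)))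
        (fun _ => True) (fun j' hj h => by cases h) (fun p h => by cases h) h)) (a u v)
  up := by
    obtain ⟨f, hf, h⟩ := hK.up
    have hv : (build hW hJ R t K).Valid (fun e => match e with
      | .inl j => s j
      | .inr (.inl _) => false
      | .inr (.inr (_, e)) => f e) := by
      rintro (j | p | ⟨j, e⟩) he
      · cases he
      · rfl
      · exact hf e he
    refine ⟨_, hv, fun v => ⟨?_, ?_⟩⟩
    · exact RW.map id (fun u v h => (build_O hW hJ R t K _ hv).2 h)
        (NR_RW_out φo h6 (fun _ k => (h k).1) h8 h9 v)
    · exact RW.map id (fun u v h => (build_O hW hJ R t K _ hv).2 h)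
        (NR_RW_in φi h7 (fun _ k => (h k).2) h10 h11 v)

end
end RG

/-! ### the cycle layer -/

def RC (m : ℕ) (i i' : Fin (2 * m + 2)) : Prop := i'.val = i.val + 1 ∨ i.val = i'.val + 1

def tC (m : ℕ) (b : Bool) : Fin (2 * m + 2) := if b then ⟨2 * m + 1, by omega⟩ else ⟨0, by omega⟩

def hC (m : ℕ) (b : Bool) (i : Fin (2 * m + 2)) : ℕ := if b then 2 * m + 2 - i.val else i.val + 1

theorem RC_flip (m : ℕ) : flip (RC m) = RC m := by
  funext i j
  simp only [flip, RC]
  exact propext or_comm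

theorem hC_lip (m : ℕ) (b : Bool) : Lip (RC m) (hC m b) := by
  intro i j h
  cases b <;> simp only [hC, RC] at * <;> simp <;> omega

theorem hC_lipB (m : ℕ) (b : Bool) (o i : Bool → Prop) (h : ∀ j, o j → j = b) :
    Lip (Bs (RC m) (tC m) o i) (fun v => v.elim 0 (hC m b)) := by
  apply Bs_lip _ (hC_lip m b)
  intro j hj
  rw [h j hj]
  cases b <;> simp [hC, tC]

theorem hC_out (m : ℕ) (b : Bool) (o i : Bool → Prop) (h : o b) (w) :
    RW (Bs (RC m) (tC m) o i) (hC m b w) none (some w) := by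
  apply Bs_cert
  intro w
  have hw := w.2
  cases b
  · by_cases h0 : w.val = 0
    · refine .inl ⟨by simp [hC], false, h, ?_⟩
      ext; simp [tC, h0]
    · refine .inr ⟨⟨w.val - 1, by omega⟩, ?_, ?_⟩
      · left; show w.val = w.val - 1 + 1; omega
      · show w.val - 1 + 1 < w.val + 1; omega
  · by_cases h0 : w.val = 2 * m + 1
    · refine .inl ⟨by simp [hC]; omega, true, h, ?_⟩
      ext; simp [tC, h0]
    · refine .inr ⟨⟨w.val + 1, by omega⟩, ?_, ?_⟩
      · right; rfl
      · show 2 * m + 2 - (w.val + 1) < 2 * m + 2 - w.val; omega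

theorem hC_in (m : ℕ) (b : Bool) (o i : Bool → Prop) (h : i b) (w) :
    RW (Bs (RC m) (tC m) o i) (hC m b w) (some w) none := by
  have := (hC_out m b i o h w).flip
  rwa [Bs_flip, RC_flip] at this

theorem SC_out {W J : Type} {R : W → W → Prop} {t : J → W} {o i : J → Prop}
    (h : SC (Bs R t o i)) (w : W) (P : W → Prop) (hP : ∀ u v, R u v → P v → P u) (hw : P w) :
    ∃ j, o j ∧ P (t j) := by
  by_contra! hc
  refine rtg_closed (fun v : Option W => v.elim True (fun w => ¬ P w)) ?_ (h none (some w))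
    trivial hw
  rintro (_ | u) (_ | v) huv hu
  · trivial
  · obtain ⟨j, hj, rfl⟩ := huv
    exact hc j hj
  · trivial
  · exact fun hv => hu (hP _ _ huv hv)

theorem SC_in {W J : Type} {R : W → W → Prop} {t : J → W} {o i : J → Prop}
    (h : SC (Bs R t o i)) (w : W) (P : W → Prop) (hP : ∀ u v, R u v → P u → P v) (hw : P w) :
    ∃ j, i j ∧ P (t j) := by
  have := h.flip
  rw [Bs_flip] at this
  exact SC_out this w P (fun u v huv hv => hP v u huv hv) hw

noncomputable def mC (m : ℕ) (w : Fin (2 * m + 2)) : ℕ := min (hC m false w) (hC m true w)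

theorem min_rw {V : Type} {R : V → V → Prop} {u v : V} {a b : ℕ} (h1 : RW R a u v)
    (h2 : RW R b u v) : RW R (min a b) u v := by
  rcases min_choice a b with h | h <;> rw [h] <;> assumption

theorem good_step (m N : ℕ) (K : RG) (hK : K.Good m N) :
    (RG.build inferInstance inferInstance (RC m) (tC m) K).Good (m + 1) (2 * m + 2 + N) where
  toPre := by
    apply RG.build_pre _ _ (RC m) (tC m) K hK.toPre (mC m) (hC m true) (hC m false) id
    · exact fun w => min_rw (hC_out m _ _ _ trivial w) (hC_out m _ _ _ trivial w)
    · exact fun w => min_rw (hC_in m _ _ _ trivial w) (hC_in m _ _ _ trivial w)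
    · intro w; simp only [mC, hC]; simp; omega
    · intro j; cases j <;> simp [mC, hC, tC] <;> omega
    · intro j
      apply SC.of_root none
      rintro (_ | w)
      · exact ⟨.refl, .refl⟩
      · exact ⟨(hC_out m (!j) _ _ (by simp) w).rtg, (hC_in m (!j) _ _ (by simp) w).rtg⟩
    · exact fun w => hC_out m false _ _ (by simp) w
    · exact fun w => hC_in m true _ _ (by simp) w
    · intro w; simp only [hC]; simp; omega
    · intro j; cases j <;> simp [hC, tC]
    · intro w; simp only [hC]; simp; omega
    · intro j; cases j <;> simp [hC, tC]
  low := by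
    intro f hf hsc
    have hsc' : SC (NR (RC m) (tC m) (fun j => f (.inl j) = false) (fun j => f (.inl j) = true)
      (fun j => K.O (fun e => f (.inr (.inr (j, e)))))) :=
      fun u v => rtg_lift id (fun u v h => .single ((RG.build_O _ _ _ _ _ f hf).1 h)) (hsc u v)
    have hB := NR_SC_base hsc'
    have hS := NR_SC_sub hsc'
    have hval : ∀ j, K.Valid (fun e => f (.inr (.inr (j, e)))) := fun j e he => hf _ he
    obtain ⟨b, hb, -⟩ := SC_out hB ⟨0, by omega⟩ (fun _ => True) (fun _ _ _ _ => trivial) trivial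
    obtain ⟨b', hb', -⟩ := SC_in hB ⟨0, by omega⟩ (fun _ => True) (fun _ _ _ _ => trivial) trivial
    have hbb : b' = !b := by
      cases b <;> cases b' <;> simp_all
    subst hbb
    have key : ∀ b, hC m b (tC m (!b)) = 2 * m + 2 := by
      intro b; cases b <;> simp [hC, tC]
    constructor
    · obtain ⟨ψ, hψ0, hψ, x, hx⟩ := (hK.low _ (hval (!b)) (hS (!b))).1
      have hL := cpot_lip (Q := fun j => K.O (fun e => f (.inr (.inr (j, e)))))
        (q := fun j v => if j = !b then ψ v else 0)
        (hC_lipB m b (fun j => f (.inl j) = false) (fun j => f (.inl j) = true) (by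
          intro j hj
          by_contra hne
          have : j = !b := by cases j <;> cases b <;> simp_all
          rw [this, hb'] at hj; cases hj)) (by
          intro j u v h
          by_cases hj : j = !b
          · subst hj; simpa using hψ _ _ h
          · simp [hj]) (by intro j; simp [hψ0])
      refine ⟨_, rfl, fun u v h => hL u v ((RG.build_O _ _ _ _ _ f hf).1 h), iK (tC m) (!b) x, ?_⟩
      rcases x with _ | x
      · simp [iK, cpot, key]; omega
      · simp [iK, cpot, key]; omega
    · obtain ⟨ψ, hψ0, hψ, x, hx⟩ := (hK.low _ (hval b) (hS b)).2
      have hL := cpot_lip (Q := fun j => flip (K.O (fun e => f (.inr (.inr (j, e))))))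
        (q := fun j v => if j = b then ψ v else 0)
        (hC_lipB m (!b) (fun j => f (.inl j) = true) (fun j => f (.inl j) = false) (by
          intro j hj
          by_contra hne
          have : j = b := by cases j <;> cases b <;> simp_all
          rw [this, hb] at hj; cases hj)) (by
          intro j u v h
          by_cases hj : j = b
          · subst hj; simpa using hψ _ _ h
          · simp [hj]) (by intro j; simp [hψ0])
      have key' := key (!b)
      rw [Bool.not_not] at key'
      refine ⟨_, rfl, fun u v h => hL u v ?_, iK (tC m) b x, ?_⟩
      · have := NR_flip _ _ _ _ _ ((RG.build_O _ _ _ _ _ f hf).1 h)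
        rwa [RC_flip] at this
      rcases x with _ | x
      · simp [iK, cpot, key']; omega
      · simp [iK, cpot, key']; omega

theorem exists_good (n : ℕ) : ∃ K : RG, K.Good n (n ^ 2 + n) := by
  induction n with
  | zero => exact ⟨_, RG.triv_good⟩
  | succ m ih =>
    obtain ⟨K, hK⟩ := ih
    have := good_step m _ K hK
    have e : 2 * m + 2 + (m ^ 2 + m) = (m + 1) ^ 2 + (m + 1) := by ring
    rw [e] at this
    exact ⟨_, this⟩

/-! ### the top layer -/

abbrev WL (m : ℕ) : Type := Bool × Fin 3 × Fin (2 * m + 1)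

theorem f3a : ∀ x a : Fin 3, x + 1 - a = x - a + 1 := by decide
theorem f3b : ∀ x : Fin 3, x = x - 1 + 1 := by decide
theorem f3c : ∀ j k s : Fin 3, j - s = k + 1 → j = k + s + 1 := by decide
theorem f3d : ∀ j : Fin 3, j + 1 ≠ j := by decide
theorem f3e : ∀ a : Fin 3, -(a + 1) - -a = 2 := by decide

def RL (m : ℕ) (x y : WL m) : Prop :=
  x.1 = y.1 ∧ ((x.2.1 = y.2.1 ∧ (y.2.2.val = x.2.2.val + 1 ∨ x.2.2.val = y.2.2.val + 1)) ∨
    (y.2.1 = x.2.1 + 1 ∧ x.2.2.val = 2 * m ∧ y.2.2.val = 0))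

def tL (m : ℕ) (j : Bool × Fin 3) : WL m := (j.1, j.2, ⟨m, by omega⟩)

/-- distance from a position relative to the middle -/
def dm (m i : ℕ) : ℕ := 1 + (i - m) + (m - i)

def hk (m : ℕ) (k : Fin 3) (i : ℕ) : ℕ :=
  if k = 0 then dm m i else if k = 1 then i + m + 2 else i + 3 * m + 3

def hL (m : ℕ) (s : Bool → Fin 3) (x : WL m) : ℕ := hk m (x.2.1 - s x.1) x.2.2.val

def mu (m : ℕ) (x : WL m) : WL m := (x.1, - x.2.1, ⟨2 * m - x.2.2.val, by omega⟩)

theorem RL_mu (m : ℕ) (x y : WL m) : RL m (mu m x) (mu m y) ↔ flip (RL m) x y := by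
  obtain ⟨s, j, i⟩ := x
  obtain ⟨s', j', i'⟩ := y
  have := i.2
  have := i'.2
  have e1 : (-j = -j') ↔ j' = j := by rw [neg_inj]; exact eq_comm
  have e2 : (-j' = -j + 1) ↔ j = j' + 1 := by
    revert j j'; decide
  have e3 : s = s' ↔ s' = s := eq_comm
  simp only [RL, mu, flip, e1, e2, e3]
  constructor
  · rintro ⟨h, h1 | h1⟩
    · exact ⟨h, .inl ⟨h1.1, by omega⟩⟩
    · exact ⟨h, .inr ⟨h1.1, by omega⟩⟩
  · rintro ⟨h, h1 | h1⟩
    · exact ⟨h, .inl ⟨h1.1, by omega⟩⟩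
    · exact ⟨h, .inr ⟨h1.1, by omega⟩⟩

theorem mu_mu (m : ℕ) (x : WL m) : mu m (mu m x) = x := by
  obtain ⟨s, j, i⟩ := x
  have := i.2
  simp only [mu, neg_neg]
  congr 2
  ext
  simp
  omega

theorem mu_t (m : ℕ) (j : Bool × Fin 3) : mu m (tL m j) = tL m (j.1, - j.2) := by
  simp only [mu, tL]
  congr 3
  omega

theorem hk_lip (m : ℕ) (k k' : Fin 3) (i i' : ℕ) (hi : i ≤ 2 * m) (hi' : i' ≤ 2 * m)
    (h : (k = k' ∧ (i' = i + 1 ∨ i = i' + 1)) ∨ (k' = k + 1 ∧ i = 2 * m ∧ i' = 0)) :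
    hk m k' i' ≤ hk m k i + 1 := by
  rcases h with ⟨rfl, h⟩ | ⟨rfl, rfl, rfl⟩
  · fin_cases k <;> simp [hk, dm] <;> omega
  · fin_cases k <;> simp [hk, dm] <;> omega

theorem RL_k {m : ℕ} {x y : WL m} (h : RL m x y) (a : Fin 3) :
    (x.2.1 - a = y.2.1 - a ∧ (y.2.2.val = x.2.2.val + 1 ∨ x.2.2.val = y.2.2.val + 1)) ∨
    (y.2.1 - a = x.2.1 - a + 1 ∧ x.2.2.val = 2 * m ∧ y.2.2.val = 0) := by
  rcases h with ⟨h, h1 | h1⟩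
  · exact .inl ⟨by rw [h1.1], h1.2⟩
  · exact .inr ⟨by rw [h1.1, f3a], h1.2⟩

/-- potential supported on side `b` -/
def pL (m : ℕ) (b : Bool) (a : Fin 3) (x : WL m) : ℕ :=
  if x.1 = b then hk m (x.2.1 - a) x.2.2.val else 0

theorem pL_lip (m : ℕ) (b : Bool) (a : Fin 3) : Lip (RL m) (pL m b a) := by
  intro x y h
  have := hk_lip m _ _ x.2.2.val y.2.2.val (by omega) (by omega) (RL_k h a)
  simp only [pL, ← h.1]
  split_ifs
  · exact this
  · simp

theorem pL_lipB (m : ℕ) (b : Bool) (a : Fin 3) (o i : Bool × Fin 3 → Prop)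
    (h : ∀ j, o (b, j) → j = a) :
    Lip (Bs (RL m) (tL m) o i) (fun v => v.elim 0 (pL m b a)) := by
  apply Bs_lip _ (pL_lip m b a)
  rintro ⟨b', j⟩ hj
  by_cases hb : b' = b
  · subst hb
    rw [h j hj]
    simp [pL, tL, hk, dm]
  · simp [pL, tL, hb]

theorem pL_lipB' (m : ℕ) (b : Bool) (a : Fin 3) (o i : Bool × Fin 3 → Prop)
    (h : ∀ j, o (b, j) → j = a) :
    Lip (Bs (flip (RL m)) (tL m) o i) (fun v => v.elim 0 (pL m b (-a) ∘ mu m)) := by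
  apply Bs_lip
  · intro x y hxy
    exact pL_lip m b (-a) _ _ ((RL_mu m x y).2 hxy)
  rintro ⟨b', j⟩ hj
  by_cases hb : b' = b
  · subst hb
    rw [h j hj]
    simp [pL, tL, hk, dm, mu]
    omega
  · simp [pL, tL, mu, hb]

theorem hk_cert (m : ℕ) (k : Fin 3) (i : ℕ) (hi : i ≤ 2 * m) :
    (k = 0 ∧ i = m) ∨ ∃ k' i', i' ≤ 2 * m ∧ hk m k' i' < hk m k i ∧
      ((k' = k ∧ (i = i' + 1 ∨ i' = i + 1)) ∨ (k = k' + 1 ∧ i' = 2 * m ∧ i = 0)) := by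
  by_cases h0 : k = 0
  · subst h0
    rcases lt_trichotomy i m with h | h | h
    · exact .inr ⟨0, i + 1, by omega, by simp [hk, dm]; omega, .inl ⟨rfl, .inr rfl⟩⟩
    · exact .inl ⟨rfl, h⟩
    · exact .inr ⟨0, i - 1, by omega, by simp [hk, dm]; omega, .inl ⟨rfl, .inl (by omega)⟩⟩
  · right
    by_cases hi0 : i = 0
    · subst hi0
      refine ⟨k - 1, 2 * m, le_rfl, ?_, .inr ⟨f3b k, rfl, rfl⟩⟩
      fin_cases k
      · exact absurd rfl h0
      · simp [hk, dm]; omega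
      · have : (2 : Fin 3) - 1 = 1 := rfl
        simp [hk, dm, this]; omega
    · refine ⟨k, i - 1, by omega, ?_, .inl ⟨rfl, .inl (by omega)⟩⟩
      simp [hk, h0]
      split_ifs <;> omega

theorem hL_cert (m : ℕ) (s : Bool → Fin 3) (w : WL m) :
    (w = tL m (w.1, s w.1)) ∨ ∃ w', RL m w' w ∧ hL m s w' < hL m s w := by
  obtain ⟨b, j, i⟩ := w
  rcases hk_cert m (j - s b) i.val (by omega) with ⟨h1, h2⟩ | ⟨k', i', hi', hlt, h⟩
  · left
    have : j = s b := by rwa [sub_eq_zero] at h1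
    subst this
    simp only [tL]
    congr 2
    ext; exact h2
  · right
    refine ⟨(b, k' + s b, ⟨i', by omega⟩), ⟨rfl, ?_⟩, ?_⟩
    · rcases h with ⟨h1, h2⟩ | ⟨h1, h2⟩
      · exact .inl ⟨by simp [h1], h2⟩
      · refine .inr ⟨?_, h2⟩
        exact f3c _ _ _ h1
    · simpa [hL] using hlt

theorem hk_pos (m : ℕ) (k : Fin 3) (i : ℕ) : 1 ≤ hk m k i := by
  simp only [hk, dm]; split_ifs <;> omega

theorem hL_out (m : ℕ) (s : Bool → Fin 3) (o i : Bool × Fin 3 → Prop) (h : ∀ b, o (b, s b)) (w) :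
    RW (Bs (RL m) (tL m) o i) (hL m s w) none (some w) := by
  apply Bs_cert
  intro w
  rcases hL_cert m s w with h1 | h1
  · exact .inl ⟨hk_pos _ _ _, _, h w.1, h1.symm⟩
  · exact .inr h1

theorem hL_in (m : ℕ) (s : Bool → Fin 3) (o i : Bool × Fin 3 → Prop) (h : ∀ b, i (b, s b)) (w) :
    RW (Bs (RL m) (tL m) o i) (hL m (fun b => - s b) (mu m w)) (some w) none := by
  have : RW (Bs (flip (RL m)) (tL m) i o) (hL m (fun b => - s b) (mu m w)) none (some w) := by
    apply Bs_cert (φ := hL m (fun b => - s b) ∘ mu m)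
    intro w
    rcases hL_cert m (fun b => - s b) (mu m w) with h1 | ⟨w', h1, h2⟩
    · refine .inl ⟨hk_pos _ _ _, _, h w.1, ?_⟩
      have := congrArg (mu m) h1
      rw [mu_mu, mu_t] at this
      rw [this]; simp [mu, tL]
    · refine .inr ⟨mu m w', ?_, ?_⟩
      · rw [← RL_mu, mu_mu]; exact h1
      · simpa [mu_mu] using h2
  have := this.flip
  rwa [Bs_flip] at this

/-- unoriented distance -/
def dL (m : ℕ) (x : WL m) : ℕ := dm m x.2.2.val

theorem dL_out (m : ℕ) (w) :
    RW (Bs (RL m) (tL m) (fun _ => True) (fun _ => True)) (dL m w) none (some w) := by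
  have := hL_out m (fun _ => w.2.1) (fun _ => True) (fun _ => True) (fun _ => trivial) w
  simpa [hL, hk, dL] using this

theorem dL_in (m : ℕ) (w) :
    RW (Bs (RL m) (tL m) (fun _ => True) (fun _ => True)) (dL m w) (some w) none := by
  have := hL_in m (fun _ => w.2.1) (fun _ => True) (fun _ => True) (fun _ => trivial) w
  refine this.mono ?_
  have := w.2.2.2
  simp [hL, hk, dL, mu, dm]; omega

theorem hk_le (m : ℕ) (k : Fin 3) (i : ℕ) (hi : i ≤ 2 * m) : hk m k i ≤ 5 * m + 3 := by
  simp only [hk, dm]; split_ifs <;> omega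

theorem hk_mid (m : ℕ) (k : Fin 3) : hk m k m ≤ 4 * m + 3 := by
  simp only [hk, dm]; split_ifs <;> omega

theorem fin3 : ∀ g : Fin 3 → Bool, (∃ j, g j = false) → (∃ j, g j = true) →
    (∃ a, g a = false ∧ ∀ j, g j = false → j = a) ∨ (∃ a, g a = true ∧ ∀ j, g j = true → j = a) := by
  decide

def vside {m : ℕ} {T : Type} : Option (WL m ⊕ (Bool × Fin 3) × T) → Bool
  | none => true
  | some (.inl w) => w.1
  | some (.inr (j, _)) => j.1

theorem top_step (m : ℕ) (K : RG) (hK : K.Good m (m ^ 2 + m)) :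
    (RG.build inferInstance inferInstance (RL m) (tL m) K).Top (m + 1)
      (4 * m + 3 + (m ^ 2 + m)) where
  toPre := by
    apply RG.build_pre _ _ (RL m) (tL m) K hK.toPre (dL m)
      (hL m (fun _ => - 1) ∘ mu m) (hL m (fun _ => 0)) (fun j => decide (j.2 ≠ 0))
    · exact dL_out m
    · exact dL_in m
    · intro w; simp only [dL, dm]; omega
    · intro j; simp only [dL, dm, tL]; omega
    · rintro ⟨b, j⟩
      have hne : ∀ b', ((b', j + 1) : Bool × Fin 3) ≠ (b, j) := by
        intro b' h
        exact f3d j (Prod.mk.inj h).2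
      apply SC.of_root none
      rintro (_ | w)
      · exact ⟨.refl, .refl⟩
      · exact ⟨(hL_out m (fun _ => j + 1) _ _ hne w).rtg, (hL_in m (fun _ => j + 1) _ _ hne w).rtg⟩
    · exact fun w => hL_out m _ _ _ (by simp) w
    · exact fun w => hL_in m (fun _ => 1) _ _ (by simp) w
    · intro w
      have := hk_le m (w.2.1 - 0) w.2.2.val (by omega)
      have : m ≤ m ^ 2 := Nat.le_self_pow (by norm_num) m
      simp only [hL]; omega
    · intro j
      have := hk_mid m (j.2 - 0)
      simp only [hL, tL]; omega
    · intro w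
      have := hk_le m ((mu m w).2.1 - (-1)) (mu m w).2.2.val (by omega)
      have : m ≤ m ^ 2 := Nat.le_self_pow (by norm_num) m
      simp only [hL, Function.comp]; omega
    · intro j
      have := hk_mid m (-j.2 - (-1))
      simp only [hL, Function.comp, mu_t]
      simp only [tL]; omega
  low := by
    intro f hf hsc v
    have hsc' : SC (NR (RL m) (tL m) (fun j => f (.inl j) = false) (fun j => f (.inl j) = true)
      (fun j => K.O (fun e => f (.inr (.inr (j, e)))))) :=
      fun u v => rtg_lift id (fun u v h => .single ((RG.build_O _ _ _ _ _ f hf).1 h)) (hsc u v)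
    have hB := NR_SC_base hsc'
    have hS := NR_SC_sub hsc'
    have hval : ∀ j, K.Valid (fun e => f (.inr (.inr (j, e)))) := fun j e he => hf _ he
    obtain ⟨b, hb⟩ : ∃ b : Bool, b = !(vside v) := ⟨_, rfl⟩
    obtain ⟨⟨b1, j1⟩, hj1, hb1⟩ := SC_out hB (tL m (b, 0)) (fun w => w.1 = b)
      (fun u v h hv => by rw [h.1, hv]) rfl
    obtain ⟨⟨b2, j2⟩, hj2, hb2⟩ := SC_in hB (tL m (b, 0)) (fun w => w.1 = b)
      (fun u v h hv => by rw [← h.1, hv]) rfl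
    simp only [tL] at hb1 hb2
    subst hb1
    subst hb2
    have z1 : ∀ (φ : WL m → ℕ) (q : Bool × Fin 3 → Option K.W → ℕ),
        (∀ w, w.1 ≠ b2 → φ w = 0) → (∀ b j x, b ≠ b2 → q (b, j) x = 0) →
        cpot (tL m) (fun v => v.elim 0 φ) q v = 0 := by
      intro φ q h1 h2
      rcases v with _ | w | ⟨⟨b, j⟩, k⟩
      · rfl
      · exact h1 _ (by rw [hb]; simp [vside])
      · have hne : b ≠ b2 := by rw [hb]; simp [vside]
        simp [cpot, tL, h1 (b, j, ⟨m, by omega⟩) hne, h2 _ _ _ hne]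
    rcases fin3 (fun j => f (.inl (b2, j))) ⟨j1, hj1⟩ ⟨j2, hj2⟩ with ⟨a, -, ha⟩ | ⟨a, -, ha⟩
    · obtain ⟨ψ, hψ0, hψ, x, hx⟩ := (hK.low _ (hval (b2, a + 2)) (hS (b2, a + 2))).1
      have hL := cpot_lip (Q := fun j => K.O (fun e => f (.inr (.inr (j, e)))))
        (q := fun j v => if j = (b2, a + 2) then ψ v else 0)
        (pL_lipB m b2 a (fun j => f (.inl j) = false) (fun j => f (.inl j) = true) ha) (by
          intro j u v h
          by_cases hj : j = (b2, a + 2)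
          · subst hj; simpa using hψ _ _ h
          · simp [hj]) (by intro j; simp [hψ0])
      have key : pL m b2 a (tL m (b2, a + 2)) = 4 * m + 3 := by
        simp [pL, tL, hk]; omega
      refine ⟨_, z1 _ _ (fun w hw => by simp [pL, hw]) (fun b j x h => by simp [h]),
        .inl fun u v h => hL u v ((RG.build_O _ _ _ _ _ f hf).1 h), iK (tL m) (b2, a + 2) x, ?_⟩
      rcases x with _ | x
      · simp [iK, cpot, key]; omega
      · simp [iK, cpot, key]; omega
    · obtain ⟨ψ, hψ0, hψ, x, hx⟩ := (hK.low _ (hval (b2, a + 1)) (hS (b2, a + 1))).2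
      have hL := cpot_lip (Q := fun j => flip (K.O (fun e => f (.inr (.inr (j, e))))))
        (q := fun j v => if j = (b2, a + 1) then ψ v else 0)
        (pL_lipB' m b2 a (fun j => f (.inl j) = true) (fun j => f (.inl j) = false) ha) (by
          intro j u v h
          by_cases hj : j = (b2, a + 1)
          · subst hj; simpa using hψ _ _ h
          · simp [hj]) (by intro j; simp [hψ0])
      have key : (pL m b2 (-a) ∘ mu m) (tL m (b2, a + 1)) = 4 * m + 3 := by
        have e := f3e a
        simp only [Function.comp, mu_t, pL]
        simp only [tL, e]
        simp [hk]; omega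
      refine ⟨_, z1 _ _ (fun w hw => by simp [pL, hw, mu]) (fun b j x h => by simp [h]),
        .inr fun u v h => hL u v (NR_flip _ _ _ _ _ ((RG.build_O _ _ _ _ _ f hf).1 h)),
        iK (tL m) (b2, a + 1) x, ?_⟩
      rcases x with _ | x
      · simp only [iK, cpot, Option.elim, key]; simp at *; omega
      · simp only [iK, cpot, Option.elim, key]; simp at *; omega
  rad := by
    intro v
    obtain ⟨b, hb⟩ : ∃ b : Bool, b = !(vside v) := ⟨_, rfl⟩
    have h1 : Lip (Bs (RL m) (tL m) (fun _ => True) (fun _ => True))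
        (fun v => v.elim 0 (fun w => if w.1 = b then dL m w else 0)) := by
      apply Bs_lip
      · intro x y h
        have h1 := h.1
        simp only [← h1, dL, dm]
        rcases h.2 with h2 | h2 <;> split_ifs <;> omega
      · intro j _
        have : dL m (tL m j) = 1 := by simp only [tL, dL, dm]; omega
        show (if _ then _ else _) ≤ 1
        rw [this]
        split_ifs <;> omega
    have hL := cpot_lip (Q := fun j => K.A (fun _ => True)) (q := fun _ _ => 0) h1
      (fun _ _ _ _ => by simp) (fun _ => rfl)
    refine ⟨_, ?_, fun u v h => hL u v (RG.build_A' _ _ _ _ _ h),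
      some (.inl (b, 0, ⟨0, by omega⟩)), ?_⟩
    · rcases v with _ | w | ⟨⟨b', j⟩, k⟩
      · rfl
      · have : w.1 ≠ b := by rw [hb]; simp [vside]
        simp [cpot, this]
      · have : b' ≠ b := by rw [hb]; simp [vside]
        simp [cpot, tL, this]
    · simp [cpot, dL, dm]
      try omega



/-! ### translation to mixed multigraphs -/

section trans
open MixedMultigraph

def St (M : MixedMultigraph) (u v : M.V) : Prop := ∃ d : M.Dart, d.fst = u ∧ d.snd = v

theorem walk_of_rw' {M : MixedMultigraph} {n : ℕ} {u v : M.V} (h : RW (flip (St M)) n v u) :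
    ∃ p : M.Walk u v, p.length ≤ n := by
  induction h with
  | refl n u => exact ⟨.nil u, Nat.zero_le _⟩
  | tail h1 h2 ih =>
    obtain ⟨p, hp⟩ := ih
    obtain ⟨d, rfl, rfl⟩ := h2
    exact ⟨.cons d p, by simp only [Walk.length]; omega⟩

theorem walk_of_rw {M : MixedMultigraph} {n : ℕ} {u v : M.V} (h : RW (St M) n u v) :
    ∃ p : M.Walk u v, p.length ≤ n := walk_of_rw' h.flip

theorem walk_lip {M : MixedMultigraph} {φ : M.V → ℕ} (h : Lip (St M) φ) {u v : M.V}
    (p : M.Walk u v) : φ v ≤ φ u + p.length := by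
  induction p with
  | nil u => simp [Walk.length]
  | cons d p ih =>
    have := h d.fst d.snd ⟨d, rfl, rfl⟩
    simp only [Walk.length]; omega

theorem walk_lip' {M : MixedMultigraph} {φ : M.V → ℕ} (h : Lip (flip (St M)) φ) {u v : M.V}
    (p : M.Walk u v) : φ u ≤ φ v + p.length := by
  induction p with
  | nil u => simp [Walk.length]
  | cons d p ih =>
    have := h d.snd d.fst ⟨d, rfl, rfl⟩
    simp only [Walk.length]; omega

theorem rtg_of_walk {M : MixedMultigraph} {u v : M.V} (p : M.Walk u v) :
    Relation.ReflTransGen (St M) u v := by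
  induction p with
  | nil u => exact .refl
  | cons d p ih => exact .head ⟨d, rfl, rfl⟩ ih

theorem sc_iff (M : MixedMultigraph) : M.StronglyConnected ↔ SC (St M) := by
  constructor
  · intro h u v
    obtain ⟨p⟩ := h u v
    exact rtg_of_walk p
  · intro h u v
    obtain ⟨n, hn⟩ := rw_of_rtg (h u v)
    exact ⟨(walk_of_rw hn).choose⟩

theorem dist_le {M : MixedMultigraph} {n : ℕ} {u v : M.V} (h : RW (St M) n u v) :
    M.dist u v ≤ n := by
  obtain ⟨p, hp⟩ := walk_of_rw h
  have h1 : M.dist u v ≤ p.length := Nat.sInf_le ⟨p, rfl⟩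
  exact h1.trans hp

theorem exists_dist {M : MixedMultigraph} (hs : M.StronglyConnected) (u v : M.V) :
    ∃ p : M.Walk u v, p.length = M.dist u v :=
  Nat.sInf_mem (s := {n | ∃ p : M.Walk u v, p.length = n}) ⟨_, (hs u v).some, rfl⟩

theorem le_ecc (M : MixedMultigraph) (u v : M.V) : max (M.dist u v) (M.dist v u) ≤ M.ecc u := by
  apply le_csSup
  · have : {n | ∃ v : M.V, n = max (M.dist u v) (M.dist v u)} =
        Set.range (fun v => max (M.dist u v) (M.dist v u)) := by
      ext n; simp [eq_comm]
    rw [this]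
    exact (Set.finite_range _).bddAbove
  · exact ⟨v, rfl⟩

theorem ecc_le {M : MixedMultigraph} {u : M.V} {n : ℕ}
    (h : ∀ v, RW (St M) n u v ∧ RW (St M) n v u) : M.ecc u ≤ n := by
  refine csSup_le (s := {n | ∃ v : M.V, n = max (M.dist u v) (M.dist v u)}) ⟨_, u, rfl⟩ ?_
  rintro _ ⟨v, rfl⟩
  exact max_le (dist_le (h v).1) (dist_le (h v).2)

theorem radius_le (M : MixedMultigraph) (u : M.V) : M.radius ≤ M.ecc u :=
  Nat.sInf_le ⟨u, rfl⟩

theorem le_radius {M : MixedMultigraph} {n : ℕ} (u : M.V) (hs : M.StronglyConnected)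
    (h : ∀ v, ∃ φ, φ v = 0 ∧ (Lip (St M) φ ∨ Lip (flip (St M)) φ) ∧ ∃ x, n ≤ φ x) :
    n ≤ M.radius := by
  refine le_csInf (s := {n | ∃ u : M.V, n = M.ecc u}) ⟨_, u, rfl⟩ ?_
  rintro _ ⟨v, rfl⟩
  obtain ⟨φ, h0, hl, x, hx⟩ := h v
  refine le_trans ?_ (le_ecc M v x)
  rcases hl with hl | hl
  · obtain ⟨p, hp⟩ := exists_dist hs v x
    have := walk_lip hl p
    exact le_max_of_le_left (by omega)
  · obtain ⟨p, hp⟩ := exists_dist hs x v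
    have := walk_lip' hl p
    exact le_max_of_le_right (by omega)

noncomputable def toM (G : RG) : MixedMultigraph :=
  { V := Option G.W
    E := G.E
    fintV := by have := G.finW; exact Fintype.ofFinite _
    fintE := by have := G.finE; exact Fintype.ofFinite _
    src := G.src
    dst := G.dst
    directed := G.dir }

theorem St_toM (G : RG) : St (toM G) = G.A fun _ => True := by
  funext u v
  apply propext
  constructor
  · rintro ⟨⟨e, r, ok⟩, rfl, rfl⟩
    cases r
    · exact ⟨e, trivial, .inl ⟨rfl, rfl⟩⟩
    · exact ⟨e, trivial, .inr ⟨ok rfl, rfl, rfl⟩⟩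
  · rintro ⟨e, -, ⟨rfl, rfl⟩ | ⟨hd, rfl, rfl⟩⟩
    · exact ⟨⟨e, false, by simp⟩, rfl, rfl⟩
    · exact ⟨⟨e, true, fun _ => hd⟩, rfl, rfl⟩

theorem St_del (G : RG) (e0 : G.E) (u v : Option G.W) (h : G.A (· ≠ e0) u v) :
    St ((toM G).deleteEdge e0) u v := by
  obtain ⟨e, he, ⟨rfl, rfl⟩ | ⟨hd, rfl, rfl⟩⟩ := h
  · exact ⟨⟨⟨e, he⟩, false, by simp⟩, rfl, rfl⟩
  · exact ⟨⟨⟨e, he⟩, true, fun _ => hd⟩, rfl, rfl⟩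

theorem St_ori (G : RG) (o : (toM G).Orientation) : St o.graph = G.O o.flip := by
  funext u v
  apply propext
  constructor
  · rintro ⟨⟨e, r, ok⟩, rfl, rfl⟩
    cases r
    · refine ⟨e, ?_⟩
      cases h : o.flip e
      · left; refine ⟨rfl, ?_, ?_⟩ <;> simp [Dart.fst, Dart.snd, Orientation.graph, h] <;> rfl
      · right; refine ⟨rfl, ?_, ?_⟩ <;> simp [Dart.fst, Dart.snd, Orientation.graph, h] <;> rfl
    · exact absurd (ok rfl) (by simp [Orientation.graph])
  · rintro ⟨e, ⟨h, rfl, rfl⟩ | ⟨h, rfl, rfl⟩⟩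
    · refine ⟨⟨e, false, by simp⟩, ?_, ?_⟩ <;>
        simp [Dart.fst, Dart.snd, Orientation.graph, h] <;> rfl
    · refine ⟨⟨e, false, by simp⟩, ?_, ?_⟩ <;>
        simp [Dart.fst, Dart.snd, Orientation.graph, h] <;> rfl

theorem main (G : RG) (n N : ℕ) (hG : G.Top n N) :
    (toM G).StronglyConnected ∧ (toM G).Bridgeless ∧ (toM G).radius = n ∧
      (∃ o : (toM G).Orientation, o.graph.StronglyConnected ∧ o.graph.radius = N) ∧
      (∀ o : (toM G).Orientation, o.graph.StronglyConnected → N ≤ o.graph.radius) := by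
  have hs : (toM G).StronglyConnected := by
    rw [sc_iff, St_toM]
    exact SC.of_root none fun v => ⟨(hG.out v).rtg, (hG.inn v).rtg⟩
  have hlow : ∀ o : (toM G).Orientation, o.graph.StronglyConnected → N ≤ o.graph.radius := by
    intro o ho
    apply le_radius (none : Option G.W) ho
    rw [sc_iff, St_ori] at ho
    rw [St_ori]
    exact hG.low o.flip (fun e he => o.flip_dir e he) ho
  refine ⟨hs, ?_, ?_, ?_, hlow⟩
  · intro e he
    rw [sc_iff]
    intro u v
    exact rtg_lift id (fun u v h => .single (St_del G e u v h)) (hG.br e he u v)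
  · apply le_antisymm
    · refine (radius_le _ (none : Option G.W)).trans (ecc_le ?_)
      rw [St_toM]
      exact fun v => ⟨hG.out v, hG.inn v⟩
    · apply le_radius (none : Option G.W) hs
      rw [St_toM]
      intro v
      obtain ⟨φ, h1, h2, h3⟩ := hG.rad v
      exact ⟨φ, h1, .inl h2, h3⟩
  · obtain ⟨f, hf, h⟩ := hG.up
    let o : (toM G).Orientation := ⟨f, hf⟩
    have ho : o.graph.StronglyConnected := by
      rw [sc_iff, St_ori]
      exact SC.of_root none fun v => ⟨(h v).1.rtg, (h v).2.rtg⟩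
    refine ⟨o, ho, le_antisymm ?_ (hlow o ho)⟩
    refine (radius_le _ (none : Option G.W)).trans (ecc_le ?_)
    rw [St_ori]
    exact h

end trans

end ORad

open MixedMultigraph in
/-- for every `r ≥ 1` there is a strongly connected bridgeless
mixed multigraph of radius `r` whose oriented radius is exactly `r² + 3r − 1`. -/
theorem oriented_radius_exact (r : ℕ) (hr : 1 ≤ r) :
    ∃ G : MixedMultigraph, G.StronglyConnected ∧ G.Bridgeless ∧ G.radius = r ∧
      (∃ o : G.Orientation, o.graph.StronglyConnected ∧
        o.graph.radius = r ^ 2 + 3 * r - 1) ∧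
      (∀ o : G.Orientation, o.graph.StronglyConnected →
        r ^ 2 + 3 * r - 1 ≤ o.graph.radius) := by
  obtain ⟨m, rfl⟩ : ∃ m, r = m + 1 := ⟨r - 1, by omega⟩
  obtain ⟨K, hK⟩ := ORad.exists_good m
  have h := ORad.main _ _ _ (ORad.top_step m K hK)
  have e : (m + 1) ^ 2 + 3 * (m + 1) - 1 = 4 * m + 3 + (m ^ 2 + m) := by
    have : (m + 1) ^ 2 + 3 * (m + 1) = 4 * m + 3 + (m ^ 2 + m) + 1 := by ring
    omega
  rw [e]
  exact ⟨_, h⟩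
end
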